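/- arXiv:1412.6456 — 5 statements merged into one kernel-verified Lean document; each statement's English description precedes it below -/
import Mathlib

section
/- Let R be a commutative noetherian Cohen-Macaulay local ring, M a finitely generated R-module, and p a prime ideal of R. Then the torsion submodule localizes: (t_R M)_p ≅ t_{R_p}(M_p). In particular, if M is torsion-free then M_p is a torsion-free R_p-module. -/
open RingTheory.Sequence CategoryTheory

universe u

noncomputable section

/-- Depth of a module: supremum of lengths of weakly regular sequences consisting of nonunits.
For a f.g. module over a noetherian local ring this is the usual depth, and the zero module
has depth `⊤`. -/
def rdepth (A : Type u) [CommRing A] (M : Type u) [AddCommGroup M] [Module A M] : ℕ∞ :=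
  sSup {n : ℕ∞ | ∃ rs : List A, (rs.length : ℕ∞) = n ∧ (∀ r ∈ rs, r ∈ nonunits A) ∧
    RingTheory.Sequence.IsWeaklyRegular M rs}

/-- Serre's condition `(S_n)`. -/
def SerreCond (R : Type u) [CommRing R] (M : Type u) [AddCommGroup M] [Module R M] (n : ℕ) :
    Prop :=
  ∀ (p : Ideal R) (hp : p.IsPrime), Nontrivial (LocalizedModule p.primeCompl M) →
    min (n : ℕ∞) (Order.height (⟨p, hp⟩ : PrimeSpectrum R)) ≤
      rdepth (Localization.AtPrime p) (LocalizedModule p.primeCompl M)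

/-- `Tor_i^R(M, N)` as an object of `ModuleCat R`. -/
def TorModCat (R : Type u) [CommRing R] (i : ℕ) (M N : Type u) [AddCommGroup M] [Module R M]
    [AddCommGroup N] [Module R N] : ModuleCat.{u} R :=
  ((Tor (ModuleCat.{u} R) i).obj (ModuleCat.of R M)).obj (ModuleCat.of R N)

/-- `Tor_i^R(M, N)` as a type (with its `R`-module structure given by instances below). -/
def TorM (R : Type u) [CommRing R] (i : ℕ) (M N : Type u) [AddCommGroup M] [Module R M]
    [AddCommGroup N] [Module R N] : Type u :=
  TorModCat R i M N

instance (R : Type u) [CommRing R] (i : ℕ) (M N : Type u) [AddCommGroup M] [Module R M]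
    [AddCommGroup N] [Module R N] : AddCommGroup (TorM R i M N) :=
  inferInstanceAs (AddCommGroup (TorModCat R i M N))

instance (R : Type u) [CommRing R] (i : ℕ) (M N : Type u) [AddCommGroup M] [Module R M]
    [AddCommGroup N] [Module R N] : Module R (TorM R i M N) :=
  inferInstanceAs (Module R (TorModCat R i M N))

/-- A regular local ring: noetherian local, whose maximal ideal is generated by a
(weakly) regular sequence. -/
def IsRegLocal (Q : Type u) [CommRing Q] : Prop :=
  IsNoetherianRing Q ∧ IsLocalRing Q ∧
    ∃ rs : List Q, RingTheory.Sequence.IsWeaklyRegular Q rs ∧ (∀ r ∈ rs, r ∈ nonunits Q) ∧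
      Ideal.span {x | x ∈ rs} = Ideal.span (nonunits Q)

/-- A (local) complete intersection: noetherian local ring whose completion is a regular
local ring modulo a regular sequence (of nonunits). -/
def IsCIRing (R : Type u) [CommRing R] : Prop :=
  IsNoetherianRing R ∧ IsLocalRing R ∧
    ∃ (Q : Type u) (_ : CommRing Q), IsRegLocal Q ∧
      ∃ rs : List Q, (∀ r ∈ rs, r ∈ nonunits Q) ∧ RingTheory.Sequence.IsWeaklyRegular Q rs ∧
        Nonempty ((Q ⧸ Ideal.span {x | x ∈ rs}) ≃+* AdicCompletion (Ideal.span (nonunits R)) R)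

/-- A hypersurface: noetherian local ring whose completion is a regular local ring modulo
a single non-zerodivisor in the maximal ideal. -/
def IsHypersurfaceRing (R : Type u) [CommRing R] : Prop :=
  IsNoetherianRing R ∧ IsLocalRing R ∧
    ∃ (Q : Type u) (_ : CommRing Q), IsRegLocal Q ∧
      ∃ f : Q, f ∈ nonunits Q ∧ f ∈ nonZeroDivisors Q ∧
        Nonempty ((Q ⧸ Ideal.span {f}) ≃+* AdicCompletion (Ideal.span (nonunits R)) R)

/-- Maximal Cohen-Macaulay module over a local ring: depth equals the Krull dimension. -/
def IsMCM (R : Type u) [CommRing R] (M : Type u) [AddCommGroup M] [Module R M] : Prop :=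
  (rdepth R M : WithBot ℕ∞) = ringKrullDim R

/-- Cohen-Macaulay local ring. -/
def IsCMLocalRing (A : Type u) [CommRing A] : Prop :=
  IsNoetherianRing A ∧ IsLocalRing A ∧ (rdepth A A : WithBot ℕ∞) = ringKrullDim A

/-- `M` has (constant) rank: free of the same rank at every minimal prime. -/
def HasRank (R : Type u) [CommRing R] (M : Type u) [AddCommGroup M] [Module R M] : Prop :=
  ∃ r : ℕ, ∀ (p : Ideal R) (hp : p.IsPrime), p ∈ minimalPrimes R →
    Nonempty ((LocalizedModule (@Ideal.primeCompl R _ p hp) M)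
      ≃ₗ[Localization (@Ideal.primeCompl R _ p hp)]
      (Fin r → Localization (@Ideal.primeCompl R _ p hp)))

/-- Projective dimension at most `n`. -/
def pdLE (R : Type u) [CommRing R] : ℕ → ∀ (M : Type u) [AddCommGroup M] [Module R M], Prop
  | 0, M, _, _ => Module.Projective R M
  | n+1, M, _, _ => ∃ (P : Type u) (_ : AddCommGroup P) (_ : Module R P),
      Module.Projective R P ∧ ∃ f : P →ₗ[R] M, Function.Surjective f ∧
        pdLE R n (LinearMap.ker f)

/-- Injective dimension at most `n`. -/
def idLE (R : Type u) [CommRing R] : ℕ → ∀ (M : Type u) [AddCommGroup M] [Module R M], Prop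
  | 0, M, _, _ => Module.Injective R M
  | n+1, M, _, _ => ∃ (I : Type u) (_ : AddCommGroup I) (_ : Module R I),
      Module.Injective R I ∧ ∃ f : M →ₗ[R] I, Function.Injective f ∧
        idLE R n (I ⧸ LinearMap.range f)

/-- Gorenstein local ring: noetherian local with finite self-injective dimension. -/
def IsGorensteinLocalRing (R : Type u) [CommRing R] : Prop :=
  IsNoetherianRing R ∧ IsLocalRing R ∧ ∃ n : ℕ, idLE R n R

/-- The map `M → R^ν` obtained from a free cover `ε : R^ν ↠ M^*` by dualizing and composing
with the biduality map; its cokernel is the pushforward `M₁`. -/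
def pushMap (R M : Type u) [CommRing R] [AddCommGroup M] [Module R M] {ν : ℕ}
    (ε : (Fin ν → R) →ₗ[R] Module.Dual R M) : M →ₗ[R] (Fin ν → R) where
  toFun m := fun i => ε (Pi.single i 1) m
  map_add' x y := by funext i; simp
  map_smul' r x := by funext i; simp

/-- Length of a module, as the Krull dimension of its lattice of submodules. -/
def mlen (R : Type u) [CommRing R] (M : Type u) [AddCommGroup M] [Module R M] :
    WithBot ℕ∞ :=
  Order.krullDim (Submodule R M)

/-- An unramified regular local ring: equicharacteristic (contains a field), or of mixed
characteristic `(0, p)` with `p` not in the square of the maximal ideal. -/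
def IsUnramifiedRegLocal (Q : Type u) [CommRing Q] : Prop :=
  IsRegLocal Q ∧
    ((∃ (K : Type u) (_ : Field K), Nonempty (K →+* Q)) ∨
     (CharZero Q ∧ ∃ p : ℕ, p.Prime ∧ (p : Q) ∈ nonunits Q ∧
        (p : Q) ∉ (Ideal.span (nonunits Q)) ^ 2))

/-- Elements of a minimal prime are locally nilpotent there. -/
theorem aux_minimal {R : Type u} [CommRing R] {q : Ideal R} (hq : q ∈ minimalPrimes R) {a : R}
    (ha : a ∈ q) : ∃ w, w ∉ q ∧ ∃ n : ℕ, w * a ^ n = 0 := by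
  have hqp : q.IsPrime := hq.1.1
  by_contra! hcon
  have hdis : Disjoint ((⊥ : Ideal R) : Set R)
      ((q.primeCompl ⊔ Submonoid.powers a : Submonoid R) : Set R) := by
    rw [Set.disjoint_left]
    intro x hx hx2
    have hx0 : x = 0 := by simpa using hx
    subst hx0
    obtain ⟨w, hw, y, ⟨n, rfl⟩, hwy⟩ := Submonoid.mem_sup.1 hx2
    exact hcon w hw n hwy
  obtain ⟨P, hP, -, hPd⟩ := Ideal.exists_le_prime_disjoint _ _ hdis
  rw [Set.disjoint_left] at hPd
  have hPq : P ≤ q := by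
    intro x hx
    by_contra hxq
    exact hPd hx (Submonoid.mem_sup_left hxq)
  have := hq.2 ⟨hP, bot_le⟩ hPq
  exact hPd (this ha) (Submonoid.mem_sup_right (Submonoid.mem_powers a))

open scoped Pointwise in
/-- Modulo a regular nonunit, an associated prime specializes strictly. -/
theorem aux_step {R : Type u} [CommRing R] [IsNoetherianRing R] [IsLocalRing R]
    {M : Type u} [AddCommGroup M] [Module R M] [Module.Finite R M] {r : R}
    (hr : r ∈ nonunits R) (hreg : IsSMulRegular M r) {p : Ideal R}
    (hp : IsAssociatedPrime p M) :
    ∃ q : Ideal R, IsAssociatedPrime q (QuotSMulTop r M) ∧ p < q := by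
  obtain ⟨hpp, x, hx⟩ := isAssociatedPrime_iff.1 hp
  have hmem : ∀ a, a ∈ p ↔ a • x = 0 := by
    intro a
    rw [hx, Submodule.mem_colon_singleton, Submodule.mem_bot]
  have hx0 : x ≠ 0 := by
    rintro rfl
    exact hpp.ne_top ((Ideal.eq_top_iff_one _).2 ((hmem 1).2 (by simp)))
  have hrp : r ∉ p := fun h => hx0 (hreg.right_eq_zero_of_smul ((hmem r).1 h))
  let N : Submodule R M := Submodule.torsionBySet R M (p : Set R)
  have hN : ∀ m, m ∈ N ↔ ∀ a ∈ p, a • m = 0 := by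
    intro m
    simp [N, Submodule.mem_torsionBySet_iff]
  have hxN : x ∈ N := (hN x).2 fun a ha => (hmem a).1 ha
  have hnot : ¬ N ≤ r • (⊤ : Submodule R M) := by
    intro hle
    have : N = ⊥ := by
      refine Submodule.eq_bot_of_le_smul_of_le_jacobson_bot (Ideal.span {r}) N
        (IsNoetherian.noetherian N) ?_ ?_
      · intro m hm
        obtain ⟨b, -, rfl⟩ := (Submodule.mem_smul_pointwise_iff_exists _ _ _).1 (hle hm)
        refine Submodule.smul_mem_smul (Ideal.mem_span_singleton_self r) ((hN b).2 ?_)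
        intro a ha
        refine hreg.right_eq_zero_of_smul ?_
        rw [smul_comm]
        exact (hN _).1 hm a ha
      · rw [IsLocalRing.jacobson_eq_maximalIdeal _ bot_ne_top, Ideal.span_singleton_le_iff_mem]
        exact (IsLocalRing.mem_maximalIdeal r).2 hr
    rw [this] at hxN
    exact hx0 ((Submodule.mem_bot R).1 hxN)
  obtain ⟨m, hm, hmr⟩ := SetLike.not_le_iff_exists.1 hnot
  obtain ⟨q, hq, hle⟩ := exists_le_isAssociatedPrime_of_isNoetherianRing R
    (Submodule.Quotient.mk m : QuotSMulTop r M)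
    (fun h => hmr ((Submodule.Quotient.mk_eq_zero _).1 h))
  refine ⟨q, hq, lt_of_le_of_ne ?_ ?_⟩
  · intro a ha
    apply hle
    rw [Submodule.mem_colon_singleton, Submodule.mem_bot, ← Submodule.Quotient.mk_smul,
      (hN m).1 hm a ha, Submodule.Quotient.mk_zero]
  · rintro rfl
    apply hrp
    apply hle
    rw [Submodule.mem_colon_singleton, Submodule.mem_bot, ← Submodule.Quotient.mk_smul,
      Submodule.Quotient.mk_eq_zero]
    exact Submodule.smul_mem_pointwise_smul _ _ _ trivial

/-- The length of a regular sequence is at most `dim R/p` for `p` associated. -/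
theorem aux_length {R : Type u} [CommRing R] [IsNoetherianRing R] [IsLocalRing R]
    (rs : List R) : ∀ (M : Type u) [AddCommGroup M] [Module R M] [Module.Finite R M]
    (p : Ideal R) (hp : IsAssociatedPrime p M), (∀ r ∈ rs, r ∈ nonunits R) →
    RingTheory.Sequence.IsWeaklyRegular M rs →
    (rs.length : ℕ∞) ≤ Order.coheight (⟨p, hp.isPrime⟩ : PrimeSpectrum R) := by
  induction rs with
  | nil => intros; simp
  | cons r rs ih =>
    intro M _ _ _ p hp hnu hreg
    rw [isWeaklyRegular_cons_iff] at hreg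
    obtain ⟨q, hq, hlt⟩ := aux_step (hnu r (by simp)) hreg.1 hp
    have h1 := ih (QuotSMulTop r M) q hq (fun s hs => hnu s (by simp [hs])) hreg.2
    have h2 : Order.coheight (⟨q, hq.isPrime⟩ : PrimeSpectrum R) + 1 ≤
        Order.coheight (⟨p, hp.isPrime⟩ : PrimeSpectrum R) :=
      Order.coheight_add_one_le hlt
    refine le_trans ?_ h2
    rw [List.length_cons]
    push_cast
    gcongr

/-- Over a Cohen-Macaulay local ring associated primes are minimal. -/
theorem aux_ass {R : Type u} [CommRing R] (hCM : IsCMLocalRing R) {p : Ideal R}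
    (hp : IsAssociatedPrime p R) : p ∈ minimalPrimes R := by
  obtain ⟨hN, hL, hd⟩ := hCM
  have hle : rdepth R R ≤ Order.coheight (⟨p, hp.isPrime⟩ : PrimeSpectrum R) := by
    refine sSup_le ?_
    rintro n ⟨rs, rfl, hnu, hreg⟩
    exact aux_length rs R p hp hnu hreg
  refine ⟨⟨hp.isPrime, bot_le⟩, ?_⟩
  rintro q ⟨hq, -⟩ hqp
  by_contra hpq
  have hlt : (⟨q, hq⟩ : PrimeSpectrum R) < ⟨p, hp.isPrime⟩ := lt_of_le_not_ge hqp hpq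
  have h1 := Order.coheight_add_one_le hlt
  have h2 : (Order.coheight (⟨q, hq⟩ : PrimeSpectrum R) : WithBot ℕ∞) ≤ rdepth R R := by
    rw [hd]
    exact Order.coheight_le_krullDim _
  have h3 := WithBot.coe_le_coe.1 h2
  have h4 : rdepth R R ≠ ⊤ := by
    intro h
    rw [h] at hd
    exact ringKrullDim_ne_top (R := R) hd.symm
  have h5 : rdepth R R + 1 ≤ rdepth R R := le_trans (by gcongr) (h1.trans h3)
  exact absurd h5 (not_le.2 (ENat.lt_add_one_iff h4 |>.2 le_rfl))

/-- The torsion submodule of the localization is the localized torsion submodule. -/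
theorem aux_main (R : Type u) [CommRing R] (hCM : IsCMLocalRing R)
    (M : Type u) [AddCommGroup M] [Module R M]
    (p : Ideal R) [hpp : p.IsPrime] :
    (Submodule.torsion R M).localized p.primeCompl =
      Submodule.torsion (Localization.AtPrime p) (LocalizedModule p.primeCompl M) := by
  have hNoeth : IsNoetherianRing R := hCM.1
  ext y
  constructor
  · rintro ⟨m, hm, s, rfl⟩
    obtain ⟨b, hb⟩ := (Submodule.mem_torsion_iff m).1 hm
    refine (Submodule.mem_torsion_iff _).2 ⟨⟨algebraMap R _ b.1,
      IsLocalization.map_nonZeroDivisors_le p.primeCompl (Localization.AtPrime p)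
        ⟨b.1, b.2, rfl⟩⟩, ?_⟩
    have hb' : b.1 • m = 0 := hb
    rw [Submonoid.mk_smul, algebraMap_smul, ← IsLocalizedModule.mk'_smul, hb',
      IsLocalizedModule.mk'_zero]
  · intro hy
    obtain ⟨⟨x, hx⟩, hxy⟩ := (Submodule.mem_torsion_iff y).1 hy
    rw [Submonoid.mk_smul] at hxy
    obtain ⟨⟨m, s⟩, rfl⟩ := IsLocalizedModule.mk'_surjective p.primeCompl
      (LocalizedModule.mkLinearMap p.primeCompl M) y
    obtain ⟨a, t, rfl⟩ := IsLocalization.exists_mk'_eq p.primeCompl x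
    -- `a` avoids minimal primes below `p`
    have ha : ∀ q ∈ minimalPrimes R, q ≤ p → a ∉ q := by
      intro q hq hqp haq
      have hqprime : q.IsPrime := hq.1.1
      obtain ⟨w, hw, n, hwn⟩ := aux_minimal hq haq
      have hxn := pow_mem hx n
      have hmul : algebraMap R (Localization.AtPrime p) w *
          (IsLocalization.mk' (Localization.AtPrime p) a t) ^ n = 0 := by
        rw [← IsLocalization.mk'_pow, ← IsLocalization.mk'_one (M := p.primeCompl),
          ← IsLocalization.mk'_mul, hwn, IsLocalization.mk'_zero]
      have hw0 := (mem_nonZeroDivisors_iff.1 hxn).2 _ hmul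
      obtain ⟨c, hc⟩ := (IsLocalization.map_eq_zero_iff p.primeCompl _ w).1 hw0
      have : (c : R) * w ∈ q := by rw [hc]; exact q.zero_mem
      rcases hqprime.mem_or_mem this with h | h
      · exact c.2 (hqp h)
      · exact hw h
    -- clear denominators
    obtain ⟨u, hu⟩ : ∃ u : p.primeCompl, u.1 • a • m = 0 := by
      have h1 : IsLocalizedModule.mk' (LocalizedModule.mkLinearMap p.primeCompl M)
          (a • m) (t * s) = 0 := by
        rw [← hxy]
        exact (IsLocalizedModule.mk'_smul_mk' _ _ _ _ _ _).symm
      rw [IsLocalizedModule.mk'_eq_zero' ] at h1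
      exact h1
    -- an element outside `p` killed off the other minimal primes
    obtain ⟨v, hv, hvq⟩ : ∃ v, v ∉ p ∧ ∀ q ∈ minimalPrimes R, ¬ q ≤ p →
        ∃ w, w ∉ q ∧ w * v = 0 := by
      have hc : ∀ q : Ideal R, ∃ v, v ∉ p ∧ (q ∈ minimalPrimes R → ¬ q ≤ p →
          ∃ w, w ∉ q ∧ w * v = 0) := by
        intro q
        by_cases hq : q ∈ minimalPrimes R ∧ ¬ q ≤ p
        · obtain ⟨v, hvq, hvp⟩ := SetLike.not_le_iff_exists.1 hq.2
          obtain ⟨w, hw, n, hwn⟩ := aux_minimal hq.1 hvq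
          exact ⟨v ^ n, fun h => hvp (hpp.mem_of_pow_mem n h), fun _ _ => ⟨w, hw, hwn⟩⟩
        · exact ⟨1, p.one_notMem, fun h1 h2 => absurd ⟨h1, h2⟩ hq⟩
      choose v hv hvq using hc
      have hfin := minimalPrimes.finite_of_isNoetherianRing R
      refine ⟨∏ q ∈ hfin.toFinset, v q, ?_, ?_⟩
      · exact p.primeCompl.prod_mem (fun q _ => hv q)
      · intro q hq hqp
        obtain ⟨w, hw, hwv⟩ := hvq q hq hqp
        obtain ⟨c, hc⟩ := Finset.dvd_prod_of_mem v (hfin.mem_toFinset.2 hq)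
        exact ⟨w, hw, by rw [hc, ← mul_assoc, hwv, zero_mul]⟩
    let I : Ideal R := (⊥ : Submodule R M).colon {(v * u.1) • m}
    have hI : ∀ c, c ∈ I ↔ c • (v * u.1) • m = 0 := fun c => by
      rw [Submodule.mem_colon_singleton, Submodule.mem_bot]
    have hIsub : ¬ ((I : Set R) ⊆ ⋃ q ∈ associatedPrimes R R, (id q : Ideal R)) := by
      rw [Ideal.subset_union_prime_finite (associatedPrimes.finite R R) (f := id) 0 0
        (fun _ h _ _ => h.1)]
      rintro ⟨q, hq, hIq⟩
      have hqm := aux_ass hCM hq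
      by_cases hqp : q ≤ p
      · refine ha q hqm hqp (hIq ((hI a).2 ?_))
        have : a • (v * u.1) • m = v • u.1 • a • m := by
          simp only [smul_smul]; congr 1; ring
        rw [this, hu, smul_zero]
      · obtain ⟨w, hw, hwv⟩ := hvq q hqm hqp
        refine hw (hIq ((hI w).2 ?_))
        rw [smul_smul, ← mul_assoc, hwv, zero_mul, zero_smul]
    obtain ⟨b, hbI, hb⟩ := Set.not_subset.1 hIsub
    have hb' : b ∈ nonZeroDivisors R := by
      by_contra hb2
      have := (biUnion_associatedPrimes_eq_compl_nonZeroDivisors R).symm.subset hb2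
      exact hb this
    obtain ⟨k, hk⟩ : ∃ k : p.primeCompl, k.1 = v * u.1 := ⟨⟨v, hv⟩ * u, rfl⟩
    have hbm : b • (k • m) = 0 := by
      rw [Submonoid.smul_def, hk]
      exact (hI b).1 hbI
    have hkt : k • m ∈ Submodule.torsion R M :=
      (Submodule.mem_torsion_iff _).2 ⟨⟨b, hb'⟩, hbm⟩
    have hfin := IsLocalizedModule.mk'_cancel_left
      (LocalizedModule.mkLinearMap p.primeCompl M) m k s
    exact ⟨k • m, hkt, k * s, hfin⟩

/-- over a CM local ring the torsion submodule localizes; in particular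
localizations of torsion-free modules are torsion-free. -/
theorem stmt2 (R : Type u) [CommRing R] (hCM : IsCMLocalRing R)
    (M : Type u) [AddCommGroup M] [Module R M] [Module.Finite R M]
    (p : Ideal R) [p.IsPrime] :
    Nonempty ((LocalizedModule p.primeCompl (Submodule.torsion R M))
        ≃ₗ[Localization.AtPrime p]
      (Submodule.torsion (Localization.AtPrime p) (LocalizedModule p.primeCompl M))) ∧
    (Submodule.torsion R M = ⊥ →
      Submodule.torsion (Localization.AtPrime p) (LocalizedModule p.primeCompl M) = ⊥) := by
  have h := aux_main R hCM M p
  refine ⟨?_, ?_⟩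
  · rw [← h]
    exact ⟨(Submodule.localizedEquiv p.primeCompl (Submodule.torsion R M)).symm⟩
  · intro h0
    rw [← h, h0]
    exact Submodule.localized'_bot _ _ _

end
end

section
/- Let R → S be a flat local homomorphism of commutative noetherian local rings and M a finitely generated R-module. If S ⊗_R M satisfies Serre's condition (S_n) as an S-module, then M satisfies (S_n) as an R-module. -/
open RingTheory.Sequence CategoryTheory

universe u

noncomputable section

section Aux

open TensorProduct IsLocalRing Abelian

lemma aux_descend {A B : Type u} [CommRing A] [CommRing B] [IsNoetherianRing A]
    [IsLocalRing A] [Algebra A B] [Module.FaithfullyFlat A B] (k : ℕ) :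
    ∀ (N N' : Type u) [AddCommGroup N] [Module A N] [Module.Finite A N]
    [AddCommGroup N'] [Module A N'] [Module B N'] [IsScalarTower A B N']
    (f : N →ₗ[A] N') (_ : IsBaseChange B f)
    (_ : ∀ i < k, Subsingleton (Ext (ModuleCat.of B (B ⊗[A] (A ⧸ maximalIdeal A)))
      (ModuleCat.of B N') i)),
    ∃ rs : List A, rs.length = k ∧ (∀ r ∈ rs, r ∈ nonunits A) ∧ IsWeaklyRegular N rs := by
  induction k with
  | zero => intros; exact ⟨[], by simp⟩
  | succ k ih =>
    intro N N' _ _ _ _ _ _ _ f hf hext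
    have h0 := hext 0 (Nat.succ_pos k)
    have h1 : Subsingleton ((ModuleCat.of B (B ⊗[A] (A ⧸ maximalIdeal A))) ⟶ ModuleCat.of B N') :=
      Ext.addEquiv₀.subsingleton_congr.mp h0
    have h2 : Subsingleton ((B ⊗[A] (A ⧸ maximalIdeal A)) →ₗ[B] N') :=
      (ModuleCat.homAddEquiv (M := ModuleCat.of B (B ⊗[A] (A ⧸ maximalIdeal A)))
        (N := ModuleCat.of B N')).symm.subsingleton
    have h3 : Subsingleton ((A ⧸ maximalIdeal A) →ₗ[A] N) := by
      refine subsingleton_of_forall_eq 0 fun g => ?_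
      have h4 : hf.equiv.toLinearMap ∘ₗ g.baseChange B = 0 := Subsingleton.elim _ _
      ext
      have h5 := LinearMap.congr_fun h4 (1 ⊗ₜ 1)
      simp only [LinearMap.comp_apply, LinearMap.baseChange_tmul, LinearEquiv.coe_coe,
        LinearMap.zero_apply, LinearEquiv.map_eq_zero_iff] at h5
      simpa using (Module.FaithfullyFlat.one_tmul_eq_zero_iff A N (A := B) _).mp h5
    obtain ⟨x, hx, hreg⟩ := IsSMulRegular.subsingleton_linearMap_iff.mp h3
    rw [Ideal.annihilator_quotient] at hx
    have hreg' : IsSMulRegular N' (algebraMap A B x) := hreg.of_flat_of_isBaseChange hf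
    let e := (QuotSMulTop.algebraMapTensorEquivTensorQuotSMulTop x N B).symm ≪≫ₗ
      QuotSMulTop.congr ((algebraMap A B) x) hf.equiv
    have hg : IsBaseChange B <|
        e.toLinearMap.restrictScalars A ∘ₗ TensorProduct.mk A B (QuotSMulTop x N) 1 :=
      IsBaseChange.of_equiv e (fun _ ↦ by simp)
    obtain ⟨rs, hl, hm, hr⟩ := ih (QuotSMulTop x N) (QuotSMulTop (algebraMap A B x) N') _ hg (by
      intro i hi
      have zero1 := AddCommGrpCat.isZero_of_iff_subsingleton.mpr (hext i (by omega))
      have zero2 := AddCommGrpCat.isZero_of_iff_subsingleton.mpr (hext (i + 1) (by omega))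
      have hreg'' : IsSMulRegular (ModuleCat.of B N') (algebraMap A B x) := hreg'
      exact AddCommGrpCat.subsingleton_of_isZero <| ShortComplex.Exact.isZero_of_both_zeros
        ((Ext.covariant_sequence_exact₃' (ModuleCat.of B (B ⊗[A] (A ⧸ maximalIdeal A)))
          hreg''.smulShortComplex_shortExact) i (i + 1) rfl)
        (zero1.eq_zero_of_src _) (zero2.eq_zero_of_tgt _))
    refine ⟨x :: rs, by simp [hl], ?_, (isWeaklyRegular_cons_iff _ _ _).mpr ⟨hreg, hr⟩⟩
    simpa using ⟨hx, hm⟩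

lemma aux_rdepth {A B : Type u} [CommRing A] [CommRing B] [IsNoetherianRing A]
    [IsNoetherianRing B] [IsLocalRing A] [IsLocalRing B] [Algebra A B]
    [Module.FaithfullyFlat A B]
    (hrad : maximalIdeal B ≤ ((maximalIdeal A).map (algebraMap A B)).radical)
    (N N' : Type u) [AddCommGroup N] [Module A N] [Module.Finite A N] [Nontrivial N]
    [AddCommGroup N'] [Module A N'] [Module B N'] [IsScalarTower A B N']
    (f : N →ₗ[A] N') (hf : IsBaseChange B f) : rdepth B N' ≤ rdepth A N := by
  have hfin : Module.Finite B N' := Module.Finite.equiv hf.equiv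
  have hnt : Nontrivial N' := by
    have : Nontrivial (B ⊗[A] N) :=
      (Module.FaithfullyFlat.nontrivial_tensorProduct_iff_right A B).mpr inferInstance
    exact hf.equiv.symm.toEquiv.nontrivial
  refine sSup_le ?_
  rintro _ ⟨rs, rfl, hm, hr⟩
  have hne : maximalIdeal B • (⊤ : Submodule B N') < ⊤ :=
    (Submodule.top_ne_ideal_smul_of_le_jacobson_annihilator
      (IsLocalRing.maximalIdeal_le_jacobson _)).symm.lt_top
  have hR : IsRegular N' rs := .of_isWeaklyRegular_of_mem_maximalIdeal N' hm hr
  have hext := ModuleCat.subsingleton_ext_of_exists_isRegular (maximalIdeal B)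
    (ModuleCat.of B (B ⊗[A] (A ⧸ maximalIdeal A))) (by
      have hann : (maximalIdeal A).map (algebraMap A B) ≤
          Module.annihilator B (B ⊗[A] (A ⧸ maximalIdeal A)) := by
        rw [Ideal.map_le_iff_le_comap]
        intro a ha
        rw [Ideal.mem_comap, Module.mem_annihilator]
        intro t
        induction t with
        | zero => simp
        | add x y hx hy => rw [smul_add, hx, hy, add_zero]
        | tmul b c =>
          rw [algebraMap_smul, ← TensorProduct.tmul_smul]
          have : a ∈ Module.annihilator A (A ⧸ maximalIdeal A) := by
            rwa [Ideal.annihilator_quotient]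
          rw [Module.mem_annihilator.mp this, TensorProduct.tmul_zero]
      change Module.support B (B ⊗[A] (A ⧸ maximalIdeal A)) ⊆ _
      rw [Module.support_eq_zeroLocus, PrimeSpectrum.zeroLocus_subset_zeroLocus_iff]
      exact hrad.trans (Ideal.radical_mono hann))
    (ModuleCat.of B N') hne rs hm hR
  obtain ⟨rs', hl, hm', hr'⟩ := aux_descend rs.length N N' f hf hext
  exact le_sSup ⟨rs', by rw [hl], hm', hr'⟩

end Aux

/-- Serre's condition `(S_n)` descends along flat local homomorphisms. -/
theorem stmt4 (R S : Type u) [CommRing R] [CommRing S] [IsNoetherianRing R] [IsNoetherianRing S]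
    [IsLocalRing R] [IsLocalRing S] [Algebra R S] [Module.Flat R S]
    (hloc : IsLocalHom (algebraMap R S))
    (M : Type u) [AddCommGroup M] [Module R M] [Module.Finite R M] (n : ℕ)
    (h : SerreCond S (TensorProduct R S M) n) :
    SerreCond R M n := by
  intro p hp hnt
  have hff : Module.FaithfullyFlat R S := Module.FaithfullyFlat.of_flat_of_isLocalHom
  obtain ⟨Q, hQ⟩ := PrimeSpectrum.comap_surjective_of_faithfullyFlat (A := R) (B := S) ⟨p, hp⟩
  have hQ' : Q.asIdeal.comap (algebraMap R S) = p := congrArg PrimeSpectrum.asIdeal hQ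
  obtain ⟨q, hq, hqQ⟩ := Ideal.exists_minimalPrimes_le (I := p.map (algebraMap R S))
    (J := Q.asIdeal) (Ideal.map_le_iff_le_comap.mpr hQ'.ge)
  have hqp : q.IsPrime := hq.1.1
  have hover : q.LiesOver p := ⟨le_antisymm (Ideal.map_le_iff_le_comap.mp hq.1.2)
    ((Ideal.comap_mono hqQ).trans hQ'.le)⟩
  have hht : Order.height (⟨p, hp⟩ : PrimeSpectrum R) ≤
      Order.height (⟨q, hqp⟩ : PrimeSpectrum S) := by
    have := Ideal.height_eq_height_add_of_liesOver_of_hasGoingDown p q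
    have h1 : p.height ≤ q.height := this ▸ le_self_add
    rwa [← PrimeSpectrum.height_eq_orderHeight, ← PrimeSpectrum.height_eq_orderHeight]
  let := Localization.AtPrime.algebraOfLiesOver p q
  have : IsLocalHom (algebraMap (Localization.AtPrime p) (Localization.AtPrime q)) := by
    rw [RingHom.algebraMap_toAlgebra]
    exact Localization.isLocalHom_localRingHom p q (algebraMap R S) Ideal.LiesOver.over
  have : Module.FaithfullyFlat (Localization.AtPrime p) (Localization.AtPrime q) :=
    Module.FaithfullyFlat.of_flat_of_isLocalHom
  -- base change
  let N := LocalizedModule p.primeCompl M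
  let N' := LocalizedModule q.primeCompl (TensorProduct R S M)
  let : Module (Localization.AtPrime p) N' :=
    Module.compHom N' (algebraMap (Localization.AtPrime p) (Localization.AtPrime q))
  have : IsScalarTower (Localization.AtPrime p) (Localization.AtPrime q) N' :=
    ⟨fun a b c => by rw [Algebra.smul_def, mul_smul]; rfl⟩
  have : IsScalarTower R (Localization.AtPrime q) N' := inferInstance
  have : IsScalarTower R (Localization.AtPrime p) N' := .of_algebraMap_smul fun r x => by
    change algebraMap (Localization.AtPrime p) (Localization.AtPrime q)
      (algebraMap R (Localization.AtPrime p) r) • x = _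
    rw [← IsScalarTower.algebraMap_apply, algebraMap_smul]
  let g : M →ₗ[R] N' := (LocalizedModule.mkLinearMap q.primeCompl
    (TensorProduct R S M)).restrictScalars R ∘ₗ TensorProduct.mk R S M 1
  have hg : IsBaseChange (Localization.AtPrime q) g :=
    (TensorProduct.isBaseChange R M S).comp
      (IsLocalizedModule.isBaseChange q.primeCompl (Localization.AtPrime q) _)
  have hl : IsBaseChange (Localization.AtPrime p) (LocalizedModule.mkLinearMap p.primeCompl M) :=
    IsLocalizedModule.isBaseChange p.primeCompl (Localization.AtPrime p) _
  let f : N →ₗ[Localization.AtPrime p] N' := hl.lift g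
  have hf : IsBaseChange (Localization.AtPrime q) f := by
    refine IsBaseChange.of_comp hl (h := f) ?_
    rw [IsBaseChange.lift_comp]
    exact hg
  have hrad : IsLocalRing.maximalIdeal (Localization.AtPrime q) ≤
      ((IsLocalRing.maximalIdeal (Localization.AtPrime p)).map
        (algebraMap (Localization.AtPrime p) (Localization.AtPrime q))).radical := by
    have := IsLocalization.AtPrime.radical_map_of_mem_minimalPrimes
      (A := Localization.AtPrime q) q _ hq
    rw [← Localization.AtPrime.map_eq_maximalIdeal, ← Localization.AtPrime.map_eq_maximalIdeal,
      ← this, Ideal.map_map, Ideal.map_map, ← IsScalarTower.algebraMap_eq,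
      ← IsScalarTower.algebraMap_eq]
  have hd := aux_rdepth hrad N N' f hf
  have hntN : Nontrivial N := hnt
  have hnt' : Nontrivial N' := by
    have : Nontrivial (TensorProduct (Localization.AtPrime p) (Localization.AtPrime q) N) :=
      (Module.FaithfullyFlat.nontrivial_tensorProduct_iff_right _ _).mpr inferInstance
    exact hf.equiv.symm.toEquiv.nontrivial
  exact (min_le_min_left _ hht).trans ((h q hqp hnt').trans hd)

end
end

section
/- Let R → S be a flat local homomorphism of commutative noetherian local rings whose fibers S_q/pS_q are Cohen-Macaulay, and let M be a finitely generated R-module satisfying Serre's condition (S_n). Then S ⊗_R M satisfies (S_n) as an S-module. -/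
open RingTheory.Sequence CategoryTheory

universe u

noncomputable section

open scoped TensorProduct

section keyflat

open IsLocalRing
open scoped Pointwise

variable {A B : Type u} [CommRing A] [CommRing B] [Algebra A B] [IsLocalRing A]

lemma aux_finite (T N : Type u)
    [AddCommGroup T] [Module A T] [Module B T] [IsScalarTower A B T] [Module.Finite B T]
    [AddCommGroup N] [Module A N] [Module.Finite A N] : Module.Finite B (T ⊗[A] N) :=
  Module.Finite.equiv (TensorProduct.AlgebraTensorModule.cancelBaseChange A B B T N)

lemma aux_exact_reg (T : Type u)
    [AddCommGroup T] [Module A T] [Module B T] [IsScalarTower A B T] [Module.Flat A T]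
    {N : Type u} [AddCommGroup N] [Module A N] (K : Submodule A N) (s : B)
    (h1 : IsSMulRegular (T ⊗[A] K) s) (h2 : IsSMulRegular (T ⊗[A] (N ⧸ K)) s) :
    IsSMulRegular (T ⊗[A] N) s := by
  refine isSMulRegular_of_range_eq_ker
    (f := TensorProduct.AlgebraTensorModule.lTensor B T K.subtype)
    (g := TensorProduct.AlgebraTensorModule.lTensor B T K.mkQ) ?_ ?_ h1 h2
  · exact Module.Flat.lTensor_preserves_injective_linearMap K.subtype K.subtype_injective
  · have := lTensor_exact T (LinearMap.exact_subtype_mkQ K) K.mkQ_surjective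
    ext x
    exact (this x).symm

lemma aux_killed (T : Type u)
    [AddCommGroup T] [Module A T] [Module B T] [IsScalarTower A B T]
    (s : B) (hs : IsSMulRegular (T ⊗[A] (A ⧸ maximalIdeal A)) s)
    (V : Type u) [AddCommGroup V] [Module A V] [Module (A ⧸ maximalIdeal A) V]
    [IsScalarTower A (A ⧸ maximalIdeal A) V] : IsSMulRegular (T ⊗[A] V) s := by
  classical
  let _ : Field (A ⧸ maximalIdeal A) := Ideal.Quotient.field _
  let b := Module.Free.chooseBasis (A ⧸ maximalIdeal A) V
  let e : V ≃ₗ[A] (_ →₀ (A ⧸ maximalIdeal A)) := b.repr.restrictScalars A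
  let e2 := (TensorProduct.AlgebraTensorModule.congr (LinearEquiv.refl B T) e) ≪≫ₗ
    TensorProduct.finsuppRight A B T (A ⧸ maximalIdeal A) _
  rw [e2.isSMulRegular_congr s]
  intro x y hxy
  ext i
  exact hs (DFunLike.congr_fun hxy i)

lemma aux_pow (T : Type u)
    [AddCommGroup T] [Module A T] [Module B T] [IsScalarTower A B T] [Module.Flat A T]
    (s : B) (hs : IsSMulRegular (T ⊗[A] (A ⧸ maximalIdeal A)) s) (k : ℕ) :
    ∀ (N : Type u) [AddCommGroup N] [Module A N],
      ((maximalIdeal A) ^ k • (⊤ : Submodule A N) = ⊥) → IsSMulRegular (T ⊗[A] N) s := by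
  induction k with
  | zero =>
    intro N _ _ hN
    have : Subsingleton N := by
      rw [← Submodule.subsingleton_iff A, ← subsingleton_iff_bot_eq_top]
      simpa using hN.symm
    have : Subsingleton (T ⊗[A] N) := inferInstance
    exact fun x y _ => Subsingleton.elim x y
  | succ k ih =>
    intro N _ _ hN
    refine aux_exact_reg T (maximalIdeal A • (⊤ : Submodule A N)) s (ih _ ?_) ?_
    · apply Submodule.map_injective_of_injective
        (Submodule.subtype_injective (maximalIdeal A • (⊤ : Submodule A N)))
      rw [Submodule.map_smul'', Submodule.map_top, Submodule.range_subtype, Submodule.map_bot,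
        ← Submodule.mul_smul, ← pow_succ, hN]
    · exact aux_killed T s hs _

lemma aux_reg [IsNoetherianRing B] [IsLocalRing B] [IsLocalHom (algebraMap A B)] (T : Type u)
    [AddCommGroup T] [Module A T] [Module B T] [IsScalarTower A B T] [Module.Flat A T]
    [Module.Finite B T]
    (s : B) (hs : IsSMulRegular (T ⊗[A] (A ⧸ maximalIdeal A)) s)
    (N : Type u) [AddCommGroup N] [Module A N] [Module.Finite A N] :
    IsSMulRegular (T ⊗[A] N) s := by
  have := aux_finite (A := A) (B := B) T N
  rw [isSMulRegular_iff_right_eq_zero_of_smul]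
  intro z hz
  have hne : (maximalIdeal A).map (algebraMap A B) ≠ ⊤ := by
    apply ne_top_of_le_ne_top (Ideal.IsPrime.ne_top (inferInstance : (maximalIdeal B).IsPrime))
    exact ((local_hom_TFAE (algebraMap A B)).out 0 2 rfl rfl).mp inferInstance
  have hK := Ideal.iInf_pow_smul_eq_bot_of_isLocalRing (R := B) (M := T ⊗[A] N) _ hne
  rw [← Submodule.mem_bot B, ← hK, Submodule.mem_iInf]
  intro k
  let K := (maximalIdeal A) ^ k • (⊤ : Submodule A N)
  have hreg : IsSMulRegular (T ⊗[A] (N ⧸ K)) s := by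
    refine aux_pow T s hs k _ ?_
    rw [← Submodule.range_mkQ, ← Submodule.map_top, ← Submodule.map_smul'']
    exact K.mkQ_map_self
  have h0 : TensorProduct.AlgebraTensorModule.lTensor B T K.mkQ z = 0 := by
    rw [isSMulRegular_iff_right_eq_zero_of_smul] at hreg
    apply hreg
    rw [← map_smul, hz, map_zero]
  obtain ⟨w, rfl⟩ := (lTensor_exact T (LinearMap.exact_subtype_mkQ K) K.mkQ_surjective z).mp h0
  clear hz h0
  induction w with
  | zero => simp
  | add x y hx hy => rw [map_add]; exact add_mem hx hy
  | tmul t n =>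
    obtain ⟨n, hn⟩ := n
    simp only [LinearMap.lTensor_tmul, Submodule.subtype_apply]
    induction hn using Submodule.smul_induction_on' with
    | smul r hr n _ =>
      rw [TensorProduct.tmul_smul, ← algebraMap_smul B r (t ⊗ₜ[A] n), ← Ideal.map_pow]
      exact Submodule.smul_mem_smul (Ideal.mem_map_of_mem _ hr) trivial
    | add x hx y hy h1 h2 => rw [TensorProduct.tmul_add]; exact add_mem h1 h2

lemma aux_flat0 [IsNoetherianRing B] [IsLocalRing B] [IsLocalHom (algebraMap A B)] (T : Type u)
    [AddCommGroup T] [Module A T] [Module B T] [IsScalarTower A B T] [Module.Flat A T]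
    [Module.Finite B T]
    (Q : Type u) [AddCommGroup Q] [Module A Q]
    (m : T →ₗ[A] T) (π : T →ₗ[A] Q) (hπ : Function.Surjective π) (hmπ : Function.Exact m π)
    (s : B) (hm : ∀ t, m t = s • t) (hs : IsSMulRegular (T ⊗[A] (A ⧸ maximalIdeal A)) s) :
    Module.Flat A Q := by
  rw [Module.Flat.iff_lTensor_injective']
  intro I
  have hexI : ∀ (N : Type u) [AddCommGroup N] [Module A N],
      Function.Exact (LinearMap.rTensor N m) (LinearMap.rTensor N π) := by
    intro N _ _
    exact rTensor_exact N hmπ hπ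
  have hact : ∀ (N : Type u) [AddCommGroup N] [Module A N] (y : T ⊗[A] N),
      LinearMap.rTensor N m y = s • y := by
    intro N _ _ y
    induction y with
    | zero => simp
    | add x y hx hy => rw [map_add, smul_add, hx, hy]
    | tmul t n => rw [LinearMap.rTensor_tmul, hm, TensorProduct.smul_tmul']
  rw [injective_iff_map_eq_zero]
  intro x' hx'
  obtain ⟨x, rfl⟩ := LinearMap.rTensor_surjective I hπ x'
  let ι := TensorProduct.AlgebraTensorModule.lTensor B T I.subtype
  let g := TensorProduct.AlgebraTensorModule.lTensor B T I.mkQ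
  have hex : Function.Exact ι g :=
    lTensor_exact T (LinearMap.exact_subtype_mkQ I) (Submodule.mkQ_surjective I)
  have hinj : Function.Injective ι :=
    Module.Flat.lTensor_preserves_injective_linearMap I.subtype I.subtype_injective
  have h1 : LinearMap.rTensor A π (ι x) = 0 := by
    rw [← hx', ← LinearMap.comp_apply, LinearMap.lTensor_comp_rTensor,
      ← LinearMap.rTensor_comp_lTensor]
    rfl
  obtain ⟨y, hy⟩ := (hexI A _).mp h1
  rw [hact] at hy
  have hreg := aux_reg T s hs (A ⧸ I)
  rw [isSMulRegular_iff_right_eq_zero_of_smul] at hreg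
  have h2 : g y = 0 := by
    apply hreg
    rw [← map_smul, hy]
    exact hex.apply_apply_eq_zero x
  obtain ⟨y', rfl⟩ := (hex y).mp h2
  rw [← map_smul] at hy
  rw [← hinj hy, ← hact]
  exact (hexI I).apply_apply_eq_zero _

lemma aux_flat [IsNoetherianRing B] [IsLocalRing B] [IsLocalHom (algebraMap A B)] (T : Type u)
    [AddCommGroup T] [Module A T] [Module B T] [IsScalarTower A B T] [Module.Flat A T]
    [Module.Finite B T]
    (s : B) (hs : IsSMulRegular (T ⊗[A] (A ⧸ maximalIdeal A)) s) :
    Module.Flat A (QuotSMulTop s T) := by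
  let m : T →ₗ[A] T := (LinearMap.lsmul B T s).restrictScalars A
  let π : T →ₗ[A] QuotSMulTop s T := (s • (⊤ : Submodule B T)).mkQ.restrictScalars A
  have hm : ∀ t, m t = s • t := fun t => rfl
  have hπ : Function.Surjective π := by
    intro x
    obtain ⟨t, rfl⟩ := Submodule.Quotient.mk_surjective _ x
    exact ⟨t, rfl⟩
  have hmπ : Function.Exact m π := by
    intro x
    change Submodule.Quotient.mk x = 0 ↔ _
    rw [Submodule.Quotient.mk_eq_zero, Submodule.mem_smul_pointwise_iff_exists]
    simp [hm]
  exact aux_flat0 T (QuotSMulTop s T) m π hπ hmπ s hm hs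

def auxE (T N : Type u) [AddCommGroup T] [Module A T] [Module B T] [IsScalarTower A B T]
    [AddCommGroup N] [Module A N] (s : B) :
    QuotSMulTop s (T ⊗[A] N) ≃ₗ[B] (QuotSMulTop s T) ⊗[A] N :=
  QuotSMulTop.congr s (TensorProduct.AlgebraTensorModule.cancelBaseChange A B B T N).symm ≪≫ₗ
  (QuotSMulTop.quotSMulTopTensorEquivQuotSMulTop s (B ⊗[A] N) T).symm ≪≫ₗ
  TensorProduct.AlgebraTensorModule.cancelBaseChange A B B _ N

lemma aux_seq [IsNoetherianRing B] [IsLocalRing B] [IsLocalHom (algebraMap A B)] (ss : List B) :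
    ∀ (T : Type u)
    [AddCommGroup T] [Module A T] [Module B T] [IsScalarTower A B T] [Module.Flat A T]
    [Module.Finite B T]
    (_ : IsWeaklyRegular (T ⊗[A] (A ⧸ maximalIdeal A)) ss)
    (N : Type u) [AddCommGroup N] [Module A N] [Module.Finite A N],
    IsWeaklyRegular (T ⊗[A] N) ss := by
  induction ss with
  | nil => intros; simp
  | cons s ss ih =>
    intro T _ _ _ _ _ _ h N _ _ _
    rw [isWeaklyRegular_cons_iff] at h ⊢
    refine ⟨aux_reg T s h.1 N, ?_⟩
    have := aux_flat T s h.1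
    rw [(auxE T N s).isWeaklyRegular_congr]
    exact ih _ (((auxE T _ s).isWeaklyRegular_congr _).mp h.2) N

lemma aux_seq2 [IsNoetherianRing B] [IsLocalRing B] [IsLocalHom (algebraMap A B)]
    [Module.Flat A B] (ss : List B)
    (h : IsWeaklyRegular (B ⊗[A] (A ⧸ maximalIdeal A)) ss) (rs : List A) :
    ∀ (N : Type u) [AddCommGroup N] [Module A N] [Module.Finite A N] (_ : IsWeaklyRegular N rs),
    IsWeaklyRegular (B ⊗[A] N) (rs.map (algebraMap A B) ++ ss) := by
  induction rs with
  | nil => intro N _ _ _ _; exact aux_seq ss B h N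
  | cons r rs ih =>
    intro N _ _ _ hN
    rw [isWeaklyRegular_cons_iff] at hN
    rw [List.map_cons, List.cons_append, isWeaklyRegular_cons_iff]
    refine ⟨hN.1.of_flat_of_isBaseChange (TensorProduct.isBaseChange A N B), ?_⟩
    rw [(QuotSMulTop.algebraMapTensorEquivTensorQuotSMulTop r N B).isWeaklyRegular_congr]
    exact ih _ hN.2

lemma aux_rdepth_s5 [IsNoetherianRing B] [IsLocalRing B] [IsLocalHom (algebraMap A B)]
    [Module.Flat A B] (J : Ideal B) (hJ : J = (maximalIdeal A).map (algebraMap A B))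
    (N : Type u) [AddCommGroup N] [Module A N] [Module.Finite A N] :
    rdepth A N + rdepth (B ⧸ J) (B ⧸ J) ≤ rdepth B (B ⊗[A] N) := by
  subst hJ
  unfold rdepth
  rw [sSup_eq_iSup, sSup_eq_iSup]
  refine ENat.biSup_add_biSup_le (f := fun x => x) (g := fun x => x) ?_ ?_ ?_
  · exact ⟨0, [], by simp⟩
  · exact ⟨0, [], by simp⟩
  rintro _ ⟨rs, rfl, hrs, hrN⟩ _ ⟨ss', rfl, hss, hsF⟩
  obtain ⟨ss, rfl⟩ : ∃ ss : List B, ss.map (algebraMap B _) = ss' :=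
    List.map_surjective_iff.mpr Ideal.Quotient.mk_surjective ss'
  apply le_sSup
  refine ⟨rs.map (algebraMap A B) ++ ss, by simp, ?_, ?_⟩
  · intro r hr
    rw [List.mem_append] at hr
    rcases hr with hr | hr
    · obtain ⟨a, ha, rfl⟩ := List.mem_map.mp hr
      exact fun hu => hrs a ha (isUnit_of_map_unit _ _ hu)
    · exact fun hu => hss _ (List.mem_map_of_mem hr) (hu.map _)
  · refine aux_seq2 ss ?_ rs N hrN
    rw [isWeaklyRegular_map_algebraMap_iff] at hsF
    exact ((Algebra.TensorProduct.quotIdealMapEquivTensorQuot B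
      (maximalIdeal A)).toLinearEquiv.isWeaklyRegular_congr ss).mp hsF

lemma aux_rdepth_congr {B : Type u} [CommRing B] {M N : Type u} [AddCommGroup M] [Module B M]
    [AddCommGroup N] [Module B N] (e : M ≃ₗ[B] N) : rdepth B M = rdepth B N := by
  unfold rdepth
  simp only [e.isWeaklyRegular_congr]

end keyflat

/-- Serre's condition `(S_n)` ascends along flat local homomorphisms with
Cohen-Macaulay fibers. -/
theorem stmt5 (R S : Type u) [CommRing R] [CommRing S] [IsNoetherianRing R] [IsNoetherianRing S]
    [IsLocalRing R] [IsLocalRing S] [Algebra R S] [Module.Flat R S]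
    (hloc : IsLocalHom (algebraMap R S))
    (hfib : ∀ (q : Ideal S) (hq : q.IsPrime),
      IsCMLocalRing ((Localization.AtPrime q) ⧸
        ((q.comap (algebraMap R S)).map
          ((algebraMap S (Localization.AtPrime q)).comp (algebraMap R S)))))
    (M : Type u) [AddCommGroup M] [Module R M] [Module.Finite R M] (n : ℕ)
    (h : SerreCond R M n) :
    SerreCond S (TensorProduct R S M) n := by
  intro q hq hnt
  obtain ⟨-, -, hF⟩ := hfib q hq
  let p : Ideal R := q.under R
  have hp : p.IsPrime := inferInstance
  have : q.LiesOver p := inferInstance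
  let _ := Localization.AtPrime.algebraOfLiesOver p q
  let A := Localization.AtPrime p
  let B := Localization.AtPrime q
  have : IsNoetherianRing A := IsLocalization.isNoetherianRing p.primeCompl A inferInstance
  have : IsNoetherianRing B := IsLocalization.isNoetherianRing q.primeCompl B inferInstance
  have : IsLocalHom (algebraMap A B) :=
    Localization.isLocalHom_localRingHom p q (algebraMap R S) Ideal.LiesOver.over
  have hflat : Module.Flat A B := inferInstance
  set J := ((q.comap (algebraMap R S)).map
          ((algebraMap S (Localization.AtPrime q)).comp (algebraMap R S))) with hJdef
  have hJ : J = (IsLocalRing.maximalIdeal A).map (algebraMap A B) := by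
    rw [← Localization.AtPrime.map_eq_maximalIdeal, Ideal.map_map, hJdef,
      ← IsScalarTower.algebraMap_eq R A B, ← IsScalarTower.algebraMap_eq R S B]
  let N := LocalizedModule p.primeCompl M
  have hfinN : Module.Finite A N := inferInstance
  -- the localized base change
  let eN : A ⊗[R] M ≃ₗ[A] N :=
    (IsLocalizedModule.isBaseChange p.primeCompl A
      (LocalizedModule.mkLinearMap p.primeCompl M)).equiv
  let e1 : B ⊗[S] (S ⊗[R] M) ≃ₗ[B] LocalizedModule q.primeCompl (S ⊗[R] M) :=
    (IsLocalizedModule.isBaseChange q.primeCompl B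
      (LocalizedModule.mkLinearMap q.primeCompl (S ⊗[R] M))).equiv
  let e2 : B ⊗[S] (S ⊗[R] M) ≃ₗ[B] B ⊗[R] M :=
    TensorProduct.AlgebraTensorModule.cancelBaseChange R S B B M
  let e3 : B ⊗[A] (A ⊗[R] M) ≃ₗ[B] B ⊗[R] M :=
    TensorProduct.AlgebraTensorModule.cancelBaseChange R A B B M
  let e4 : B ⊗[A] (A ⊗[R] M) ≃ₗ[B] B ⊗[A] N :=
    TensorProduct.AlgebraTensorModule.congr (LinearEquiv.refl B B) eN
  let e : LocalizedModule q.primeCompl (S ⊗[R] M) ≃ₗ[B] B ⊗[A] N :=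
    e1.symm ≪≫ₗ e2 ≪≫ₗ e3.symm ≪≫ₗ e4
  have hN : Nontrivial N := by
    by_contra hc
    rw [not_nontrivial_iff_subsingleton] at hc
    have : Subsingleton (B ⊗[A] N) := inferInstance
    have := e.toEquiv.subsingleton
    exact not_subsingleton _ this
  have hp' := h p hp hN
  have hht : q.height ≤ p.height + rdepth (B ⧸ J) (B ⧸ J) := by
    have hlies : (IsLocalRing.maximalIdeal B).LiesOver (IsLocalRing.maximalIdeal A) :=
      ⟨((IsLocalRing.local_hom_TFAE (algebraMap A B)).out 0 4 rfl rfl |>.mp inferInstance).symm⟩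
    have h1 := Ideal.height_le_height_add_of_liesOver (IsLocalRing.maximalIdeal A)
      (IsLocalRing.maximalIdeal B)
    have hA : (IsLocalRing.maximalIdeal A).height = p.height := by
      have := IsLocalRing.maximalIdeal_height_eq_ringKrullDim (R := A)
      rw [IsLocalization.AtPrime.ringKrullDim_eq_height p A] at this
      exact_mod_cast this
    have hB : (IsLocalRing.maximalIdeal B).height = q.height := by
      have := IsLocalRing.maximalIdeal_height_eq_ringKrullDim (R := B)
      rw [IsLocalization.AtPrime.ringKrullDim_eq_height q B] at this
      exact_mod_cast this
    rw [hA, hB, ← hJ] at h1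
    refine h1.trans (add_le_add le_rfl ?_)
    have h2 : (((IsLocalRing.maximalIdeal B).map (Ideal.Quotient.mk J)).height : WithBot ℕ∞) ≤
        ringKrullDim (B ⧸ J) := by
      apply Ideal.height_le_ringKrullDim_of_ne_top
      intro htop
      have h3 := congrArg (Ideal.comap (Ideal.Quotient.mk J)) htop
      rw [Ideal.comap_map_of_surjective _ Ideal.Quotient.mk_surjective, Ideal.comap_top] at h3
      have hle : J ≤ IsLocalRing.maximalIdeal B := by
        rw [hJ]
        exact ((IsLocalRing.local_hom_TFAE (algebraMap A B)).out 0 2 rfl rfl).mp inferInstance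
      rw [← RingHom.ker_eq_comap_bot, Ideal.mk_ker, sup_eq_left.mpr hle] at h3
      exact Ideal.IsPrime.ne_top inferInstance h3
    rw [← hF] at h2
    exact_mod_cast h2
  have hq' : Order.height (⟨q, hq⟩ : PrimeSpectrum S) = q.height :=
    (PrimeSpectrum.height_eq_orderHeight ⟨q, hq⟩).symm
  have hp'' : Order.height (⟨p, hp⟩ : PrimeSpectrum R) = p.height :=
    (PrimeSpectrum.height_eq_orderHeight ⟨p, hp⟩).symm
  rw [hp''] at hp'
  rw [hq', aux_rdepth_congr e]
  refine le_trans ?_ (aux_rdepth_s5 (A := A) (B := B) J hJ N)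
  refine le_trans ?_ (add_le_add_left hp' _)
  rcases le_total (n : ℕ∞) p.height with hc | hc
  · rw [min_eq_left hc]
    exact (min_le_left _ _).trans le_self_add
  · rw [min_eq_right hc]
    exact (min_le_right _ _).trans hht

end
end

section
/- Let R be a Gorenstein local ring, M a finitely generated torsion-free R-module, and M_1 its pushforward. For n ≥ 0, M satisfies Serre's condition (S_{n+1}) if and only if M_1 satisfies (S_n). -/
open RingTheory.Sequence CategoryTheory

universe u

noncomputable section

section EVsec

open Abelian Pointwise

/-- Vanishing of `Ext^i(N, M)`. -/
def EV (A : Type u) [CommRing A] (N : Type u) [AddCommGroup N] [Module A N]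
    (M : Type u) [AddCommGroup M] [Module A M] (i : ℕ) : Prop :=
  Subsingleton (Ext (ModuleCat.of A N) (ModuleCat.of A M) i)

variable {A : Type u} [CommRing A]
variable {X : Type u} [AddCommGroup X] [Module A X]
variable {N₁ : Type u} [AddCommGroup N₁] [Module A N₁]
variable {N₂ : Type u} [AddCommGroup N₂] [Module A N₂]
variable {N₃ : Type u} [AddCommGroup N₃] [Module A N₃]

theorem EV.iff_zero : EV A X N₁ 0 ↔ Subsingleton (X →ₗ[A] N₁) :=
  (Ext.addEquiv₀.trans ModuleCat.homAddEquiv).toEquiv.subsingleton_congr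

theorem EV.of_eq {i : ℕ} (h : ∀ x : Ext (ModuleCat.of A X) (ModuleCat.of A N₁) i, x = 0) :
    EV A X N₁ i := ⟨fun a b => by rw [h a, h b]⟩

theorem EV.eq {i : ℕ} (h : EV A X N₁ i) (x : Ext (ModuleCat.of A X) (ModuleCat.of A N₁) i) :
    x = 0 := h.elim _ _

theorem ses_of {f : N₁ →ₗ[A] N₂} {g : N₂ →ₗ[A] N₃} (hf : Function.Injective f)
    (hfg : Function.Exact f g) (hg : Function.Surjective g) :
    (ModuleCat.shortComplexOfCompEqZero f g hfg.linearMap_comp_eq_zero).ShortExact :=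
  ModuleCat.shortComplex_shortExact _ hfg hf hg

section les
variable {f : N₁ →ₗ[A] N₂} {g : N₂ →ₗ[A] N₃}

theorem EV.cov1 (hf : Function.Injective f)
    (hfg : Function.Exact f g) (hg : Function.Surjective g) {i : ℕ} (h3 : EV A X N₃ i) (h2 : EV A X N₂ (i + 1)) : EV A X N₁ (i + 1) :=
  .of_eq fun x => by
    obtain ⟨y, rfl⟩ := Ext.covariant_sequence_exact₁ _ (ses_of hf hfg hg) x (h2.eq _) rfl
    rw [EV.eq h3 y, Ext.zero_comp]

theorem EV.cov2 (hf : Function.Injective f)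
    (hfg : Function.Exact f g) (hg : Function.Surjective g) {i : ℕ} (h3 : EV A X N₃ i) (h1 : EV A X N₁ i) : EV A X N₂ i :=
  .of_eq fun x => by
    obtain ⟨y, rfl⟩ := Ext.covariant_sequence_exact₂ _ (ses_of hf hfg hg) x (h3.eq _)
    rw [EV.eq h1 y, Ext.zero_comp]

theorem EV.cov3 (hf : Function.Injective f)
    (hfg : Function.Exact f g) (hg : Function.Surjective g) {i : ℕ} (h2 : EV A X N₂ i) (h1 : EV A X N₁ (i + 1)) : EV A X N₃ i :=
  .of_eq fun x => by
    obtain ⟨y, rfl⟩ := Ext.covariant_sequence_exact₃ _ (ses_of hf hfg hg) x rfl (h1.eq _)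
    rw [EV.eq h2 y, Ext.zero_comp]

theorem EV.con1 (hf : Function.Injective f)
    (hfg : Function.Exact f g) (hg : Function.Surjective g) {i : ℕ} (h2 : EV A N₂ X i) (h3 : EV A N₃ X (i + 1)) : EV A N₁ X i :=
  .of_eq fun x => by
    obtain ⟨y, rfl⟩ := Ext.contravariant_sequence_exact₁ (ses_of hf hfg hg) _ x (add_comm 1 i)
      (h3.eq _)
    rw [EV.eq h2 y, Ext.comp_zero]

theorem EV.con2 (hf : Function.Injective f)
    (hfg : Function.Exact f g) (hg : Function.Surjective g) {i : ℕ} (h1 : EV A N₁ X i) (h3 : EV A N₃ X i) : EV A N₂ X i :=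
  .of_eq fun x => by
    obtain ⟨y, rfl⟩ := Ext.contravariant_sequence_exact₂ (ses_of hf hfg hg) _ x (h1.eq _)
    rw [EV.eq h3 y, Ext.comp_zero]

theorem EV.con3 (hf : Function.Injective f)
    (hfg : Function.Exact f g) (hg : Function.Surjective g) {i : ℕ} (h1 : EV A N₁ X i) (h2 : EV A N₂ X (i + 1)) : EV A N₃ X (i + 1) :=
  .of_eq fun x => by
    obtain ⟨y, rfl⟩ := Ext.contravariant_sequence_exact₃ (ses_of hf hfg hg) _ x (h2.eq _)
      (add_comm 1 i)
    rw [EV.eq h1 y, Ext.comp_zero]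

end les

theorem EV.cov1_zero {f : N₁ →ₗ[A] N₂} (hf : Function.Injective f) (h2 : EV A X N₂ 0) :
    EV A X N₁ 0 := by
  rw [EV.iff_zero] at *
  exact ⟨fun a b => LinearMap.ext fun x => hf (LinearMap.congr_fun (h2.elim (f ∘ₗ a) (f ∘ₗ b)) x)⟩

theorem EV.con3_zero {g : N₂ →ₗ[A] N₃} (hg : Function.Surjective g) (h2 : EV A N₂ X 0) :
    EV A N₃ X 0 := by
  rw [EV.iff_zero] at *
  exact ⟨fun a b => LinearMap.ext fun x => by
    obtain ⟨y, rfl⟩ := hg x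
    exact LinearMap.congr_fun (h2.elim (a ∘ₗ g) (b ∘ₗ g)) y⟩

theorem EV.of_projective [Module.Projective A X] (i : ℕ) : EV A X N₁ (i + 1) := by
  have : CategoryTheory.Projective (ModuleCat.of A X) :=
    (IsProjective.iff_projective X).mp inferInstance
  exact .of_eq fun x => Ext.eq_zero_of_projective x

theorem EV.of_subsingleton_left [Subsingleton X] (i : ℕ) : EV A X N₁ i := by
  cases i with
  | zero => rw [EV.iff_zero]; infer_instance
  | succ i => exact .of_projective i

theorem EV.congr_left (e : N₁ ≃ₗ[A] N₂) {i : ℕ} (h : EV A N₂ X i) : EV A N₁ X i :=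
  EV.con2 (N₁ := PUnit.{u + 1}) (f := 0) (g := e.toLinearMap)
    (Function.injective_of_subsingleton _)
    ((LinearMap.exact_zero_iff_injective _ _).2 e.injective) e.surjective
    (.of_subsingleton_left i) h

theorem EV.of_subsingleton_right [Subsingleton N₁] (i : ℕ) : EV A X N₁ i :=
  .of_eq fun x => by
    have : 𝟙 (ModuleCat.of A N₁) = 0 := by ext y; exact Subsingleton.elim _ _
    rw [← Ext.comp_mk₀_id x, this, Ext.mk₀_zero, Ext.comp_zero]

theorem EV.congr_right (e : N₁ ≃ₗ[A] N₂) {i : ℕ} (h : EV A X N₂ i) : EV A X N₁ i :=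
  EV.cov2 (N₁ := PUnit.{u + 1}) (f := 0) (g := e.toLinearMap)
    (Function.injective_of_subsingleton _)
    ((LinearMap.exact_zero_iff_injective _ _).2 e.injective) e.surjective
    h (.of_subsingleton_right i)

theorem EV.pi {i : ℕ} (h : EV A X N₁ i) (ν : ℕ) : EV A X (Fin ν → N₁) i :=
  .of_eq fun x => by
    have : 𝟙 (ModuleCat.of A (Fin ν → N₁)) = ∑ j, ModuleCat.ofHom (LinearMap.proj j) ≫
        ModuleCat.ofHom (LinearMap.single A (fun _ : Fin ν => N₁) j) := by
      ext y
      simp [← ModuleCat.ofHom_comp, ModuleCat.hom_sum]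
    rw [← Ext.comp_mk₀_id x, this, Ext.mk₀_sum, Ext.comp_sum]
    refine Finset.sum_eq_zero fun j _ => ?_
    rw [← Ext.mk₀_comp_mk₀, ← Ext.comp_assoc_of_third_deg_zero, EV.eq h (x.comp _ _),
      Ext.zero_comp]

/-- multiplication by a regular element that kills `X`. -/
theorem EV.succ_of_quot {x : A} (hx : IsSMulRegular N₁ x) (hX : x ∈ Module.annihilator A X)
    {i : ℕ} (h : EV A X (QuotSMulTop x N₁) i) : EV A X N₁ (i + 1) :=
  .of_eq fun y => by
    have h0 : x • 𝟙 (ModuleCat.of A X) = 0 := by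
      ext y
      exact Module.mem_annihilator.1 hX y
    have h2 : x • y = 0 := by
      rw [← Ext.mk₀_id_comp y, ← Ext.smul_comp, ← Ext.mk₀_smul, h0, Ext.mk₀_zero, Ext.zero_comp]
    have h1 : y.comp (Ext.mk₀ (x • 𝟙 (ModuleCat.of A N₁))) (add_zero (i + 1)) = 0 := by
      rw [Ext.mk₀_smul, Ext.comp_smul, Ext.comp_mk₀_id, h2]
    obtain ⟨z, rfl⟩ := Ext.covariant_sequence_exact₁ _ (hx.smulShortComplex_shortExact
      (M := ModuleCat.of A N₁)) y h1 rfl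
    have hz : z = 0 := EV.eq h z
    rw [hz, Ext.zero_comp]; rfl

theorem exact_quot (x : A) : Function.Exact (LinearMap.lsmul A N₁ x)
    (Submodule.mkQ (x • (⊤ : Submodule A N₁)) : N₁ →ₗ[A] QuotSMulTop x N₁) :=
  LinearMap.exact_lsmul_mkQ_smul_top N₁ x

theorem EV.nak [IsLocalRing A] [IsNoetherianRing A] [Module.Finite A N₁] [Module.Finite A N₂]
    {x : A} (hx : IsSMulRegular N₁ x) (hm : x ∈ IsLocalRing.maximalIdeal A)
    {i : ℕ} (h : EV A (QuotSMulTop x N₁) N₂ (i + 1)) : EV A N₁ N₂ i := by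
  have key : ∀ y : Ext (ModuleCat.of A N₁) (ModuleCat.of A N₂) i, ∃ z, x • z = y := by
    intro y
    obtain ⟨z, rfl⟩ := Ext.contravariant_sequence_exact₁ (hx.smulShortComplex_shortExact
      (M := ModuleCat.of A N₁)) (ModuleCat.of A N₂) y (add_comm 1 i) (h.eq _)
    change Ext (ModuleCat.of A N₁) (ModuleCat.of A N₂) i at z
    refine ⟨z, ?_⟩
    change x • z = (Ext.mk₀ (x • 𝟙 (ModuleCat.of A N₁))).comp z (zero_add i)
    rw [Ext.mk₀_smul, Ext.smul_comp, Ext.mk₀_id_comp]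
  have hfin : (⊤ : Submodule A (Ext (ModuleCat.of A N₁) (ModuleCat.of A N₂) i)).FG :=
    Module.Finite.fg_top
  have : (⊤ : Submodule A (Ext (ModuleCat.of A N₁) (ModuleCat.of A N₂) i)) = ⊥ := by
    refine Submodule.eq_bot_of_le_smul_of_le_jacobson_bot (IsLocalRing.maximalIdeal A) _ hfin ?_
      (IsLocalRing.maximalIdeal_le_jacobson _)
    intro y _
    obtain ⟨z, rfl⟩ := key y
    exact Submodule.smul_mem_smul hm trivial
  exact .of_eq fun y => (Submodule.mem_bot A).1 (this ▸ (trivial : y ∈ (⊤ : Submodule A _)))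

end EVsec
section Gsec
set_option linter.unusedSectionVars false
open IsLocalRing Pointwise

variable {A : Type u} [CommRing A] [IsLocalRing A] [IsNoetherianRing A]

/-- `A` has injective dimension `d`, detected by the residue field. -/
def GD (A : Type u) [CommRing A] [IsLocalRing A] (d : ℕ) : Prop :=
  (∀ (N : Type u) [AddCommGroup N] [Module A N] [Module.Finite A N], ∀ i, d < i → EV A N A i) ∧
    ¬ EV A (A ⧸ maximalIdeal A) A d

/-- Ext-depth at least `j`. -/
def DP (A : Type u) [CommRing A] [IsLocalRing A] (N : Type u) [AddCommGroup N] [Module A N]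
    (j : ℕ) : Prop :=
  ∀ i < j, EV A (A ⧸ maximalIdeal A) N i

theorem ann_res {x : A} : x ∈ Module.annihilator A (A ⧸ maximalIdeal A) ↔ x ∈ maximalIdeal A := by
  rw [Ideal.annihilator_quotient]

theorem reg_quot_prime {p : Ideal A} (hp : p.IsPrime) {x : A} (hx : x ∉ p) :
    IsSMulRegular (A ⧸ p) x := by
  have : x • (1 : A ⧸ p) ≠ 0 := by
    rw [Algebra.smul_def, mul_one]
    simpa [Ideal.Quotient.eq_zero_iff_mem] using hx
  intro a b hab
  simp only [Algebra.smul_def] at hab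
  refine mul_left_cancel₀ ?_ hab
  simpa [Ideal.Quotient.eq_zero_iff_mem] using hx

/-- vanishing at all quotients by primes `≠ m` one step below universal vanishing -/
theorem EV.quot_prime {d : ℕ}
    (h : ∀ (N : Type u) [AddCommGroup N] [Module A N] [Module.Finite A N], EV A N A (d + 1))
    {p : Ideal A} (hp : p.IsPrime) (hne : p ≠ maximalIdeal A) : EV A (A ⧸ p) A d := by
  obtain ⟨x, hx, hxp⟩ : ∃ x ∈ maximalIdeal A, x ∉ p := by
    by_contra! hcon
    exact hne (le_antisymm (le_maximalIdeal hp.ne_top) hcon)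
  exact EV.nak (reg_quot_prime hp hxp) hx (h _)

theorem EV.all_of_res {d : ℕ}
    (h : ∀ (N : Type u) [AddCommGroup N] [Module A N] [Module.Finite A N], EV A N A (d + 1))
    (hk : EV A (A ⧸ maximalIdeal A) A d)
    (N : Type u) [AddCommGroup N] [Module A N] [hN : Module.Finite A N] : EV A N A d := by
  refine IsNoetherianRing.induction_on_isQuotientEquivQuotientPrime A hN
    (motive := fun N _ _ _ => EV A N A d) ?_ ?_ ?_
  · intro N _ _ _ _
    exact .of_subsingleton_left d
  · intro N _ _ _ p e
    refine EV.congr_left e ?_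
    by_cases hp : p.1 = maximalIdeal A
    · rw [hp]; exact hk
    · exact EV.quot_prime h p.2 hp
  · intro N₁ _ _ _ N₂ _ _ _ N₃ _ _ _ f g hf hg hfg h1 h3
    exact EV.con2 hf hfg hg h1 h3

theorem exists_GD (hfin : ∃ B : ℕ, ∀ (N : Type u) [AddCommGroup N] [Module A N]
    [Module.Finite A N], ∀ i, B < i → EV A N A i) : ∃ d, GD A d := by
  classical
  refine ⟨Nat.find hfin, Nat.find_spec hfin, fun hk => ?_⟩
  have h1 : ∀ (N : Type u) [AddCommGroup N] [Module A N] [Module.Finite A N],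
      EV A N A (Nat.find hfin + 1) :=
    fun N _ _ _ => Nat.find_spec hfin N _ (Nat.lt_succ_self _)
  have h2 := fun (N : Type u) [AddCommGroup N] [Module A N] [Module.Finite A N] =>
    EV.all_of_res h1 hk N
  rcases hd : Nat.find hfin with _ | e
  · have := h2 A
    rw [hd, EV.iff_zero] at this
    have h3 := LinearMap.congr_fun (this.elim LinearMap.id 0) 1
    exact one_ne_zero h3
  · refine Nat.find_min hfin (m := e) (by omega) fun N _ _ _ i hi => ?_
    rcases Nat.lt_or_ge (e + 1) i with h | h
    · exact Nat.find_spec hfin N i (by omega)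
    · obtain rfl : i = e + 1 := by omega
      rw [← hd]; exact h2 N

theorem EV.hom_res_inj {N : Type u} [AddCommGroup N] [Module A N]
    (h : ¬ EV A (A ⧸ maximalIdeal A) N 0) :
    ∃ f : (A ⧸ maximalIdeal A) →ₗ[A] N, Function.Injective f := by
  rw [EV.iff_zero, not_subsingleton_iff_nontrivial] at h
  obtain ⟨f, hf⟩ := exists_ne (0 : (A ⧸ maximalIdeal A) →ₗ[A] N)
  refine ⟨f, ?_⟩
  have : IsSimpleModule A (A ⧸ maximalIdeal A) :=
    isSimpleModule_iff_isCoatom.2 (maximalIdeal.isMaximal A).out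
  exact (LinearMap.injective_or_eq_zero f).resolve_right hf

theorem exists_reg {N : Type u} [AddCommGroup N] [Module A N] [Module.Finite A N]
    (h : EV A (A ⧸ maximalIdeal A) N 0) : ∃ x ∈ maximalIdeal A, IsSMulRegular N x := by
  rw [EV.iff_zero] at h
  obtain ⟨x, hx, h2⟩ := IsSMulRegular.subsingleton_linearMap_iff.1 h
  exact ⟨x, ann_res.1 hx, h2⟩

theorem lsmul_inj {N : Type u} [AddCommGroup N] [Module A N] {x : A} (hx : IsSMulRegular N x) :
    Function.Injective (LinearMap.lsmul A N x) := hx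

theorem smul_top_lt (N : Type u) [AddCommGroup N] [Module A N] [Module.Finite A N]
    [Nontrivial N] : maximalIdeal A • (⊤ : Submodule A N) < ⊤ :=
  lt_top_iff_ne_top.2 (Ne.symm (Submodule.top_ne_ideal_smul_of_le_jacobson_annihilator
    (maximalIdeal_le_jacobson _)))

variable {d : ℕ}

theorem GD.depth_of_ev_aux (hd : GD A d) (j : ℕ) : ∀ (s : ℕ) (_ : s + j ≤ d)
    (N : Type u) [AddCommGroup N] [Module A N] [Module.Finite A N]
    (_ : ∀ i, s < i → EV A N A i), DP A N j := by
  induction j with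
  | zero => intro s _ N _ _ _ _ i hi; omega
  | succ j ih =>
    intro s hs N _ _ _ h
    have h0 : EV A (A ⧸ maximalIdeal A) N 0 := by
      by_contra hcon
      obtain ⟨f, hf⟩ := EV.hom_res_inj hcon
      refine hd.2 (EV.con1 (f := f) (g := (LinearMap.range f).mkQ) hf
        (LinearMap.exact_map_mkQ_range f) (Submodule.mkQ_surjective _) (h d (by omega))
        (hd.1 _ _ (Nat.lt_succ_self d)))
    obtain ⟨x, hx, hreg⟩ := exists_reg h0
    have h1 := ih (s + 1) (by omega) (QuotSMulTop x N) fun i hi => by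
      obtain ⟨i, rfl⟩ : ∃ i', i = i' + 1 := ⟨i - 1, by omega⟩
      exact EV.con3 (lsmul_inj hreg) (exact_quot x) (Submodule.mkQ_surjective _)
        (h i (by omega)) (h (i + 1) (by omega))
    intro i hi
    rcases i with _ | i
    · exact h0
    · exact EV.succ_of_quot hreg (ann_res.2 hx) (h1 i (by omega))

theorem GD.depth_of_ev (hd : GD A d) {N : Type u} [AddCommGroup N] [Module A N] [Module.Finite A N]
    (h : ∀ i, 0 < i → EV A N A i) : DP A N d :=
  hd.depth_of_ev_aux d 0 (by omega) N h

theorem GD.depth_self (hd : GD A d) : DP A A d :=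
  hd.depth_of_ev fun i hi => by
    obtain ⟨i, rfl⟩ : ∃ i', i = i' + 1 := ⟨i - 1, by omega⟩
    exact .of_projective i

theorem GD.ev_of_depth_aux (hd : GD A d) (j : ℕ) : ∀ 
    (N : Type u) [AddCommGroup N] [Module A N] [Module.Finite A N]
    (_ : DP A N j), ∀ i, d < i + j → EV A N A i := by
  induction j with
  | zero => intro N _ _ _ _ i hi; exact hd.1 N i hi
  | succ j ih =>
    intro N _ _ _ h i hi
    obtain ⟨x, hx, hreg⟩ := exists_reg (h 0 (by omega))
    refine EV.nak hreg hx (ih _ (fun i hi => ?_) _ (by omega))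
    exact EV.cov3 (lsmul_inj hreg) (exact_quot x) (Submodule.mkQ_surjective _)
      (h i (by omega)) (h (i + 1) (by omega))

theorem GD.ev_of_depth (hd : GD A d) {N : Type u} [AddCommGroup N] [Module A N] [Module.Finite A N]
    (h : DP A N d) (i : ℕ) (hi : 0 < i) : EV A N A i :=
  hd.ev_of_depth_aux d N h i (by omega)

theorem GD.dim (hd : GD A d) : ringKrullDim A = d := by
  obtain ⟨rs, hlen, hmem, hreg⟩ := ModuleCat.exists_isRegular_of_exists_subsingleton_ext
    (maximalIdeal A) d (ModuleCat.of A A) (smul_top_lt A) (ModuleCat.of A (A ⧸ maximalIdeal A))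
    (by
      change Module.support A (A ⧸ maximalIdeal A) = _
      rw [Module.support_eq_zeroLocus, Ideal.annihilator_quotient])
    hd.depth_self
  change IsRegular A rs at hreg
  rw [← ringKrullDim_add_length_eq_ringKrullDim_of_isRegular rs hreg, hlen]
  have hle : Ideal.ofList rs ≤ maximalIdeal A := Ideal.span_le.2 hmem
  have hlt : Ideal.ofList rs • (⊤ : Submodule A A) < ⊤ :=
    (Submodule.smul_mono_left hle).trans_lt (smul_top_lt A)
  have hprime : ∀ p : Ideal A, p.IsPrime → Ideal.ofList rs ≤ p → p = maximalIdeal A := by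
    intro p hp hle'
    by_contra hne
    have h1 : EV A (A ⧸ p) A d :=
      EV.quot_prime (fun N _ _ _ => hd.1 N _ (Nat.lt_succ_self d)) hp hne
    let g : (A ⧸ p) →ₗ[A] (A ⧸ maximalIdeal A) :=
      Submodule.mapQ p (maximalIdeal A) LinearMap.id (le_maximalIdeal hp.ne_top)
    have hg : Function.Surjective g := by
      intro y
      obtain ⟨y, rfl⟩ := Submodule.mkQ_surjective _ y
      exact ⟨Submodule.mkQ _ y, rfl⟩
    apply hd.2
    rcases hde : d with _ | e
    · rw [hde] at h1
      exact EV.con3_zero hg h1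
    · rw [hde] at h1 
      refine EV.con3 (f := (LinearMap.ker g).subtype) (Submodule.injective_subtype _)
        (LinearMap.exact_subtype_ker_map g) hg ?_ h1
      refine ModuleCat.subsingleton_ext_of_exists_isRegular (Ideal.ofList rs)
        (ModuleCat.of A (LinearMap.ker g)) ?_ (ModuleCat.of A A) hlt rs
        (fun r hr => Ideal.subset_span hr) hreg e (by omega)
      change Module.support A (LinearMap.ker g) ⊆ _
      refine (Module.support_subset_of_injective _ (Submodule.injective_subtype _)).trans ?_
      rw [Module.support_eq_zeroLocus, Ideal.annihilator_quotient]
      exact PrimeSpectrum.zeroLocus_anti_mono hle'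
  have hnt : Nontrivial (A ⧸ Ideal.ofList rs) :=
    Ideal.Quotient.nontrivial_iff.2 (fun h => (maximalIdeal.isMaximal A).ne_top
      (top_le_iff.1 (h ▸ hle)))
  have h0 : ringKrullDim (A ⧸ Ideal.ofList rs) = 0 := by
    have : Ring.KrullDimLE 0 (A ⧸ Ideal.ofList rs) := by
      refine Ring.KrullDimLE.mk₀ fun I hI => ?_
      have hc := hprime (I.comap (Ideal.Quotient.mk _)) inferInstance (by
        intro x hx
        rw [Ideal.mem_comap, Ideal.Quotient.eq_zero_iff_mem.2 hx]; exact I.zero_mem)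
      have hmax : (I.comap (Ideal.Quotient.mk (Ideal.ofList rs))).IsMaximal := by
        rw [hc]; exact maximalIdeal.isMaximal A
      have := Ideal.map_eq_top_or_isMaximal_of_surjective (Ideal.Quotient.mk (Ideal.ofList rs))
        Ideal.Quotient.mk_surjective hmax
      rw [Ideal.map_comap_of_surjective _ Ideal.Quotient.mk_surjective] at this
      exact this.resolve_left hI.ne_top
    exact ringKrullDimZero_iff_ringKrullDim_eq_zero.1 this
  rw [h0, zero_add]

end Gsec
section Rees
open IsLocalRing Pointwise

variable {A : Type u} [CommRing A] [IsLocalRing A] [IsNoetherianRing A]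
variable (N : Type u) [AddCommGroup N] [Module A N] [Module.Finite A N]

theorem le_rdepth_iff_exists (j : ℕ) : (j : ℕ∞) ≤ rdepth A N ↔
    ∃ rs : List A, rs.length = j ∧ (∀ r ∈ rs, r ∈ maximalIdeal A) ∧ IsWeaklyRegular N rs := by
  constructor
  · intro h
    rcases j with _ | k
    · exact ⟨[], rfl, by simp, IsWeaklyRegular.nil _ _⟩
    · have h2 : (k : ℕ∞) < rdepth A N :=
        lt_of_lt_of_le (by exact_mod_cast Nat.lt_succ_self k) h
      obtain ⟨_, ⟨rs, rfl, hr, hw⟩, hlt⟩ := lt_sSup_iff.1 h2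
      have hlt : k < rs.length := by exact_mod_cast hlt
      refine ⟨rs.take (k + 1), by simp; omega, fun r hr' => hr r (List.mem_of_mem_take hr'), ?_⟩
      rw [← List.take_append_drop (k + 1) rs, isWeaklyRegular_append_iff] at hw
      exact hw.1
  · rintro ⟨rs, rfl, hr, hw⟩
    exact le_sSup ⟨rs, rfl, hr, hw⟩

theorem le_rdepth_iff (j : ℕ) : (j : ℕ∞) ≤ rdepth A N ↔ DP A N j := by
  rw [le_rdepth_iff_exists]
  rcases subsingleton_or_nontrivial N with hN | hN
  · refine iff_of_true ⟨List.replicate j 0, by simp, fun r hr => ?_, ?_⟩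
      fun i _ => .of_subsingleton_right i
    · rw [List.eq_of_mem_replicate hr]; exact Ideal.zero_mem _
    · constructor
      intro i hi
      have : Subsingleton (N ⧸ (Ideal.ofList (List.take i (List.replicate j (0 : A))) • ⊤ : Submodule A N)) :=
        (Submodule.mkQ_surjective _).subsingleton
      exact Function.injective_of_subsingleton _
  · have hsupp : Module.support A (A ⧸ maximalIdeal A) =
        PrimeSpectrum.zeroLocus (maximalIdeal A : Set A) := by
      rw [Module.support_eq_zeroLocus, Ideal.annihilator_quotient]
    constructor
    · rintro ⟨rs, rfl, hr, hw⟩ i hi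
      have hlt : Ideal.ofList rs • (⊤ : Submodule A N) < ⊤ :=
        (Submodule.smul_mono_left (Ideal.span_le.2 hr)).trans_lt (smul_top_lt N)
      exact ModuleCat.subsingleton_ext_of_exists_isRegular (maximalIdeal A)
        (ModuleCat.of A (A ⧸ maximalIdeal A)) hsupp.le (ModuleCat.of A N) (smul_top_lt N)
        rs hr ⟨hw, hlt.ne'⟩ i hi
    · intro h
      obtain ⟨rs, hlen, hmem, hreg⟩ := ModuleCat.exists_isRegular_of_exists_subsingleton_ext
        (maximalIdeal A) j (ModuleCat.of A N) (smul_top_lt N)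
        (ModuleCat.of A (A ⧸ maximalIdeal A)) hsupp h
      exact ⟨rs, hlen, hmem, hreg.1⟩

end Rees
section Loc
open IsLocalRing

theorem hasInj_of_idLE (R : Type u) [CommRing R] (n : ℕ) : ∀ (M : Type u) [AddCommGroup M]
    [Module R M], idLE R n M → HasInjectiveDimensionLT (ModuleCat.of R M) (n + 1) := by
  induction n with
  | zero =>
    intro M _ _ h
    have h : Module.Injective R M := h
    have : Injective (ModuleCat.of R M) := (Module.injective_iff_injective_object R M).1 h
    infer_instance
  | succ n ih =>
    rintro M _ _ ⟨I, _, _, hI, f, hf, h⟩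
    have : Injective (ModuleCat.of R I) := (Module.injective_iff_injective_object R I).1 hI
    exact ((ses_of hf (LinearMap.exact_map_mkQ_range f)
      (Submodule.mkQ_surjective _)).hasInjectiveDimensionLT_X₃_iff n this).1 (ih _ h)

theorem exists_GD_localization {R : Type u} [CommRing R] (hG : IsGorensteinLocalRing R)
    (p : Ideal R) [hp : p.IsPrime] : ∃ d, GD (Localization.AtPrime p) d ∧
      Order.height (⟨p, hp⟩ : PrimeSpectrum R) = d := by
  obtain ⟨hN, hL, n, hn⟩ := hG
  have h1 : HasInjectiveDimensionLE (ModuleCat.of R R) n := hasInj_of_idLE R n R hn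
  have h2 := ModuleCat.localizedModule_hasInjectiveDimensionLE n p.primeCompl (ModuleCat.of R R)
  have h2 : HasInjectiveDimensionLT ((ModuleCat.of R R).localizedModule p.primeCompl) (n + 1) := h2
  have : IsNoetherianRing (Localization.AtPrime p) :=
    IsLocalization.isNoetherianRing p.primeCompl _ hN
  have : IsLocalizedModule p.primeCompl
      ((ModuleCat.of R R).localizedModuleMkLinearMap p.primeCompl) :=
    ModuleCat.localizedModule_isLocalizedModule (ModuleCat.of R R) p.primeCompl
  let e : Localization.AtPrime p ≃ₗ[Localization.AtPrime p]
      (ModuleCat.of R R).localizedModule p.primeCompl :=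
    LinearEquiv.extendScalarsOfIsLocalization p.primeCompl
        (Localization.AtPrime p) (IsLocalizedModule.linearEquiv p.primeCompl
        (Algebra.linearMap R (Localization.AtPrime p))
        ((ModuleCat.of R R).localizedModuleMkLinearMap p.primeCompl))
  obtain ⟨d, hd⟩ := exists_GD (A := Localization.AtPrime p) ⟨n, fun N _ _ _ i hi =>
    EV.congr_right (N₂ := (ModuleCat.of R R).localizedModule p.primeCompl) e
      (HasInjectiveDimensionLT.subsingleton _ (n + 1) i hi _)⟩
  refine ⟨d, hd, ?_⟩
  have h3 := hd.dim
  rw [IsLocalization.AtPrime.ringKrullDim_eq_height p] at h3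
  have h4 : p.height = Order.height (⟨p, hp⟩ : PrimeSpectrum R) :=
    PrimeSpectrum.height_eq_orderHeight ⟨p, hp⟩
  rw [← h4]
  exact_mod_cast h3

end Loc
section ext1
open Abelian

variable {A : Type u} [CommRing A]
variable {X : Type u} [AddCommGroup X] [Module A X]
variable {N₁ : Type u} [AddCommGroup N₁] [Module A N₁]
variable {N₂ : Type u} [AddCommGroup N₂] [Module A N₂]
variable {N₃ : Type u} [AddCommGroup N₃] [Module A N₃]

theorem EV.extend {f : N₁ →ₗ[A] N₂} {g : N₂ →ₗ[A] N₃} (hf : Function.Injective f)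
    (hfg : Function.Exact f g) (hg : Function.Surjective g) (h3 : EV A N₃ X 1)
    (φ : N₁ →ₗ[A] X) : ∃ ψ : N₂ →ₗ[A] X, ψ ∘ₗ f = φ := by
  obtain ⟨y, hy⟩ := Ext.contravariant_sequence_exact₁ (ses_of hf hfg hg) (ModuleCat.of A X)
    (Ext.mk₀ (ModuleCat.ofHom φ)) (add_comm 1 0) (h3.eq _)
  obtain ⟨ψ, rfl⟩ := (Ext.mk₀_bijective _ _).2 y
  rw [Ext.mk₀_comp_mk₀] at hy
  have := (Ext.mk₀_bijective _ _).1 hy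
  refine ⟨ψ.hom, ?_⟩
  ext x
  exact LinearMap.congr_fun (congrArg ModuleCat.Hom.hom this) x

theorem EV.one_of_extend {f : N₁ →ₗ[A] N₂} {g : N₂ →ₗ[A] N₃} (hf : Function.Injective f)
    (hfg : Function.Exact f g) (hg : Function.Surjective g) (h2 : EV A N₂ X 1)
    (h : ∀ φ : N₁ →ₗ[A] X, ∃ ψ : N₂ →ₗ[A] X, ψ ∘ₗ f = φ) : EV A N₃ X 1 :=
  .of_eq fun x => by
    obtain ⟨y, rfl⟩ := Ext.contravariant_sequence_exact₃ (ses_of hf hfg hg) _ x (h2.eq _)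
      (add_comm 1 0)
    obtain ⟨φ, rfl⟩ := (Ext.mk₀_bijective _ _).2 y
    obtain ⟨ψ, hψ⟩ := h φ.hom
    have : φ = (ModuleCat.shortComplexOfCompEqZero f g hfg.linearMap_comp_eq_zero).f ≫
        ModuleCat.ofHom ψ := by
      ext x
      exact (LinearMap.congr_fun hψ x).symm
    rw [this, ← Ext.mk₀_comp_mk₀, ShortComplex.ShortExact.extClass_comp_assoc]

end ext1

section tf
open IsLocalRing

/-- Clearing denominators of a functional on a localized module. -/
theorem exists_clear {R : Type u} [CommRing R] [IsNoetherianRing R]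
    {M : Type u} [AddCommGroup M] [Module R M] [Module.Finite R M] (S : Submonoid R)
    (F : LocalizedModule S M →ₗ[Localization S] Localization S) :
    ∃ (h : M →ₗ[R] R) (s : S), ∀ y, algebraMap R (Localization S) (h y) =
      (s : R) • F (LocalizedModule.mkLinearMap S M y) := by
  have : Module.FinitePresentation R M := Module.finitePresentation_of_finite R M
  obtain ⟨h, s, hs⟩ := Module.FinitePresentation.exists_lift_of_isLocalizedModule S
    (Algebra.linearMap R (Localization S))
    (F.restrictScalars R ∘ₗ LocalizedModule.mkLinearMap S M)
  exact ⟨h, s, fun y => LinearMap.congr_fun hs y⟩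

theorem exists_dual_ne {R : Type u} [CommRing R] (hG : IsGorensteinLocalRing R)
    {M : Type u} [AddCommGroup M] [Module R M] [Module.Finite R M]
    (htf : Submodule.torsion R M = ⊥) {m : M} (hm : m ≠ 0) : ∃ g : M →ₗ[R] R, g m ≠ 0 := by
  have hN := hG.1
  by_contra! hcon
  have : Nontrivial (Submodule.span R {m}) :=
    ⟨⟨m, Submodule.mem_span_singleton_self m⟩, 0, fun h => hm (congrArg Subtype.val h)⟩
  obtain ⟨p, hp⟩ := associatedPrimes.nonempty R (Submodule.span R {m})
  obtain ⟨hp, ⟨y, hy⟩, hpy⟩ := isAssociatedPrime_iff.1 hp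
  have hpy : ∀ x, x ∈ p ↔ x • y = 0 := by
    intro x
    rw [hpy, Submodule.mem_colon_singleton, Submodule.mem_bot, Subtype.ext_iff]; rfl
  have hy0 : y ≠ 0 := by
    rintro rfl
    exact hp.ne_top ((Ideal.eq_top_iff_one _).2 ((hpy 1).2 (smul_zero _)))
  have hgy : ∀ g : M →ₗ[R] R, g y = 0 := by
    intro g
    obtain ⟨a, rfl⟩ := Submodule.mem_span_singleton.1 hy
    rw [map_smul, hcon g, smul_zero]
  have hzd : (p : Set R) ⊆ ⋃ q ∈ associatedPrimes R R, (q : Set R) := by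
    rw [biUnion_associatedPrimes_eq_compl_nonZeroDivisors]
    intro x hx hx2
    have : y ∈ Submodule.torsion R M := ⟨⟨x, hx2⟩, (hpy x).1 hx⟩
    rw [htf] at this
    exact hy0 this
  obtain ⟨q, hq, hpq⟩ := (Ideal.subset_union_prime_finite (associatedPrimes.finite R R)
    (f := fun q => q) ⊥ ⊥ (fun i hi _ _ => hi.isPrime)).1 hzd
  obtain ⟨hqp, r, hr⟩ := isAssociatedPrime_iff.1 hq
  have hr : ∀ x, x ∈ q ↔ x * r = 0 := by
    intro x
    rw [hr, Submodule.mem_colon_singleton, Submodule.mem_bot]; rfl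
  -- `q` has height zero
  have hqmin : p = q ∧ GD (Localization.AtPrime q) 0 := by
    obtain ⟨d, hd, hht⟩ := exists_GD_localization hG q
    have : IsNoetherianRing (Localization.AtPrime q) :=
      IsLocalization.isNoetherianRing q.primeCompl _ hN
    rcases d with _ | d
    · have : IsMin (⟨q, hqp⟩ : PrimeSpectrum R) := Order.height_eq_zero.1 (by simpa using hht)
      have h2 := this (b := ⟨p, hp⟩) hpq
      exact ⟨le_antisymm hpq h2, hd⟩
    · exfalso
      obtain ⟨x, hx, hreg⟩ := exists_reg (hd.depth_self 0 (by omega))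
      obtain ⟨⟨b, s⟩, rfl⟩ := IsLocalization.mk'_surjective q.primeCompl x
      have hb : b ∈ q := (IsLocalization.AtPrime.mk'_mem_maximal_iff _ q b s).1 hx
      have h0 : IsLocalization.mk' (Localization.AtPrime q) b s •
          algebraMap R (Localization.AtPrime q) r = 0 := by
        rw [smul_eq_mul, mul_comm, IsLocalization.mul_mk'_eq_mk'_of_mul, mul_comm, (hr b).1 hb,
          IsLocalization.mk'_zero]
      have h1 : algebraMap R (Localization.AtPrime q) r = 0 :=
        hreg (by simpa using h0)
      obtain ⟨t, ht⟩ := (IsLocalization.map_eq_zero_iff q.primeCompl _ r).1 h1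
      exact t.2 ((hr t).2 ht)
  obtain ⟨rfl, hd⟩ := hqmin
  have : IsNoetherianRing (Localization.AtPrime p) :=
    IsLocalization.isNoetherianRing p.primeCompl _ hN
  let A := Localization.AtPrime p
  let N := LocalizedModule p.primeCompl M
  let y' : N := LocalizedModule.mkLinearMap p.primeCompl M y
  have hy' : y' ≠ 0 := by
    intro h
    obtain ⟨t, ht⟩ := (IsLocalizedModule.eq_zero_iff p.primeCompl
      (LocalizedModule.mkLinearMap p.primeCompl M)).1 h
    exact t.2 ((hpy t).2 ht)
  have hker : maximalIdeal A ≤ LinearMap.ker (LinearMap.toSpanSingleton A N y') := by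
    intro x hx
    obtain ⟨⟨b, s⟩, rfl⟩ := IsLocalization.mk'_surjective p.primeCompl x
    have hb : b ∈ p := (IsLocalization.AtPrime.mk'_mem_maximal_iff _ p b s).1 hx
    rw [LinearMap.mem_ker, LinearMap.toSpanSingleton_apply]
    have h1 : IsLocalization.mk' A b s = IsLocalization.mk' A 1 s * algebraMap R A b := by
      rw [mul_comm, IsLocalization.mul_mk'_eq_mk'_of_mul, mul_one]
    change IsLocalization.mk' A b s • y' = 0
    rw [h1, mul_smul, algebraMap_smul]
    change _ • (b • LocalizedModule.mkLinearMap p.primeCompl M y) = 0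
    rw [← map_smul, (hpy b).1 hb, map_zero, smul_zero]
  let φ : (A ⧸ maximalIdeal A) →ₗ[A] N := Submodule.liftQ _ _ hker
  have hφ1 : φ (Submodule.Quotient.mk 1) = y' :=
    (Submodule.liftQ_apply _ _ _).trans (one_smul A y')
  have hφ : Function.Injective φ := by
    have : IsSimpleModule A (A ⧸ maximalIdeal A) :=
      isSimpleModule_iff_isCoatom.2 (maximalIdeal.isMaximal A).out
    refine (LinearMap.injective_or_eq_zero φ).resolve_right fun h => hy' ?_
    rw [← hφ1, h, LinearMap.zero_apply]
  obtain ⟨ι, hι⟩ := EV.hom_res_inj hd.2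
  have : Module.Finite A N := inferInstance
  obtain ⟨F, hF⟩ := EV.extend hφ (LinearMap.exact_map_mkQ_range φ) (Submodule.mkQ_surjective _)
    (hd.1 _ 1 one_pos) ι
  have hFy : F y' ≠ 0 := by
    rw [← hφ1, ← LinearMap.comp_apply, hF]
    intro h
    have h2 := hι (h.trans (map_zero ι).symm)
    rw [Submodule.Quotient.mk_eq_zero] at h2
    exact (maximalIdeal.isMaximal A).ne_top ((Ideal.eq_top_iff_one _).2 h2)
  obtain ⟨h, s, hs⟩ := exists_clear p.primeCompl F
  have h2 := hs y
  rw [hgy h, map_zero] at h2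
  exact hFy (IsLocalizedModule.smul_injective (Algebra.linearMap R (Localization.AtPrime p)) s
    (h2.symm.trans (smul_zero _).symm))

end tf
section Main
open IsLocalRing

theorem GD.core {A : Type u} [CommRing A] [IsLocalRing A] [IsNoetherianRing A] {d : ℕ}
    (hd : GD A d)
    {N₁ : Type u} [AddCommGroup N₁] [Module A N₁] [Module.Finite A N₁]
    {N₂ : Type u} [AddCommGroup N₂] [Module A N₂]
    {N₃ : Type u} [AddCommGroup N₃] [Module A N₃] [Module.Finite A N₃]
    {f : N₁ →ₗ[A] N₂} {g : N₂ →ₗ[A] N₃} (hf : Function.Injective f)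
    (hfg : Function.Exact f g) (hg : Function.Surjective g) {ν : ℕ} (e : N₂ ≃ₗ[A] (Fin ν → A))
    (hext : ∀ φ : N₁ →ₗ[A] A, ∃ ψ : N₂ →ₗ[A] A, ψ ∘ₗ f = φ) (n : ℕ) :
    DP A N₁ (min (n + 1) d) ↔ DP A N₃ (min n d) := by
  have hfree : DP A N₂ d := fun i hi => EV.congr_right e (EV.pi (hd.depth_self i hi) ν)
  have hproj : ∀ i, EV A N₂ A (i + 1) := fun i => EV.congr_left e (.of_projective i)
  constructor
  · intro h
    rcases Nat.lt_or_ge n d with hn | hn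
    · intro i hi
      exact EV.cov3 hf hfg hg (hfree i (by omega)) (h (i + 1) (by omega))
    · rw [min_eq_right (by omega)] at h ⊢
      refine hd.depth_of_ev fun i hi => ?_
      obtain ⟨i, rfl⟩ : ∃ i', i = i' + 1 := ⟨i - 1, by omega⟩
      rcases i with _ | i
      · exact EV.one_of_extend hf hfg hg (hproj 0) hext
      · exact EV.con3 hf hfg hg (hd.ev_of_depth h _ (by omega)) (hproj _)
  · intro h i hi
    rcases i with _ | i
    · exact EV.cov1_zero hf (hfree 0 (by omega))
    · exact EV.cov1 hf hfg hg (h i (by omega)) (hfree _ (by omega))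

theorem serre_iff {R : Type u} [CommRing R] (hG : IsGorensteinLocalRing R)
    (M : Type u) [AddCommGroup M] [Module R M] [Module.Finite R M] (n : ℕ) :
    SerreCond R M n ↔ ∀ (p : Ideal R) (_ : p.IsPrime) (d : ℕ), GD (Localization.AtPrime p) d →
      DP (Localization.AtPrime p) (LocalizedModule p.primeCompl M) (min n d) := by
  have hN := hG.1
  refine forall₂_congr fun p hp => ?_
  have : IsNoetherianRing (Localization.AtPrime p) :=
    IsLocalization.isNoetherianRing p.primeCompl _ hN
  obtain ⟨d, hd, hht⟩ := exists_GD_localization hG p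
  have huniq : ∀ d', GD (Localization.AtPrime p) d' → d' = d := fun d' hd' => by
    have := hd'.dim.symm.trans hd.dim
    exact_mod_cast this
  have hmin : min (n : ℕ∞) (d : ℕ∞) = ((min n d : ℕ) : ℕ∞) :=
    (Nat.mono_cast (α := ℕ∞)).map_min.symm
  rw [hht, hmin, le_rdepth_iff]
  constructor
  · intro h d' hd'
    rw [huniq d' hd']
    rcases subsingleton_or_nontrivial (LocalizedModule p.primeCompl M) with hs | hs
    · exact fun i _ => .of_subsingleton_right i
    · exact h hs
  · intro h _
    exact h d hd

theorem eps_apply {R M : Type u} [CommRing R] [AddCommGroup M] [Module R M] {ν : ℕ}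
    (ε : (Fin ν → R) →ₗ[R] Module.Dual R M) (v : Fin ν → R) (m : M) :
    ε v m = ∑ i, v i • pushMap R M ε m i := by
  conv_lhs => rw [pi_eq_sum_univ' v]
  simp [pushMap]

theorem pushMap_injective {R M : Type u} [CommRing R] [AddCommGroup M] [Module R M]
    [Module.Finite R M] (hG : IsGorensteinLocalRing R) (htf : Submodule.torsion R M = ⊥) {ν : ℕ}
    (ε : (Fin ν → R) →ₗ[R] Module.Dual R M) (hsurj : Function.Surjective ε) :
    Function.Injective (pushMap R M ε) := by
  rw [injective_iff_map_eq_zero]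
  intro m hm
  by_contra hne
  obtain ⟨g, hg⟩ := exists_dual_ne hG htf hne
  obtain ⟨v, rfl⟩ := hsurj g
  apply hg
  rw [eps_apply, hm]
  simp

theorem extend_functional {R M : Type u} [CommRing R] [IsNoetherianRing R] [AddCommGroup M]
    [Module R M] [Module.Finite R M] {ν : ℕ} (S : Submonoid R)
    (ε : (Fin ν → R) →ₗ[R] Module.Dual R M) (hsurj : Function.Surjective ε)
    (φ : LocalizedModule S M →ₗ[Localization S] Localization S) :
    ∃ ψ : LocalizedModule S (Fin ν → R) →ₗ[Localization S] Localization S,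
      ψ ∘ₗ LocalizedModule.map S (pushMap R M ε) = φ := by
  obtain ⟨h, s, hs⟩ := exists_clear S φ
  obtain ⟨v, rfl⟩ := hsurj h
  let L : (Fin ν → R) →ₗ[R] R := ∑ i, v i • LinearMap.proj i
  have hL : ∀ m, L (pushMap R M ε m) = ε v m := by
    intro m
    simp [L, eps_apply]
  let L' : LocalizedModule S (Fin ν → R) →ₗ[Localization S] Localization S :=
    IsLocalizedModule.mapExtendScalars S (LocalizedModule.mkLinearMap S (Fin ν → R))
      (Algebra.linearMap R (Localization S)) (Localization S) L
  have hL' : ∀ w, L' (LocalizedModule.mkLinearMap S _ w) = algebraMap R (Localization S) (L w) := by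
    intro w
    exact IsLocalizedModule.map_apply S (LocalizedModule.mkLinearMap S (Fin ν → R))
      (Algebra.linearMap R (Localization S)) L w
  refine ⟨IsLocalization.mk' (Localization S) 1 s • L', ?_⟩
  apply LinearMap.restrictScalars_injective R
  apply IsLocalizedModule.linearMap_ext S (LocalizedModule.mkLinearMap S M)
    (Algebra.linearMap R (Localization S))
  ext m
  have h1 : LocalizedModule.map S (pushMap R M ε) (LocalizedModule.mkLinearMap S M m) =
      LocalizedModule.mkLinearMap S _ (pushMap R M ε m) := LocalizedModule.map_mk _ _ _ _
  change IsLocalization.mk' (Localization S) 1 s • L' (LocalizedModule.map S (pushMap R M ε)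
    (LocalizedModule.mkLinearMap S M m)) = φ (LocalizedModule.mkLinearMap S M m)
  rw [h1, hL', hL, hs, smul_eq_mul, Algebra.smul_def, ← mul_assoc, IsLocalization.mk'_spec,
    map_one, one_mul]

end Main

/-- `M` satisfies `(S_(n+1))` iff its pushforward `M₁` satisfies `(S_n)`. -/
theorem stmt8 (R : Type u) [CommRing R] (hG : IsGorensteinLocalRing R)
    (M : Type u) [AddCommGroup M] [Module R M] [Module.Finite R M]
    (htf : Submodule.torsion R M = ⊥) (ν : ℕ)
    (ε : (Fin ν → R) →ₗ[R] Module.Dual R M) (hsurj : Function.Surjective ε)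
    (hmin : ∀ m : ℕ, m < ν →
      ¬ ∃ g : (Fin m → R) →ₗ[R] Module.Dual R M, Function.Surjective g) (n : ℕ) :
    SerreCond R M (n + 1) ↔
      SerreCond R ((Fin ν → R) ⧸ LinearMap.range (pushMap R M ε)) n := by
  have hN := hG.1
  rw [serre_iff hG, serre_iff hG]
  refine forall₂_congr fun p hp => forall₂_congr fun d hd => ?_
  have : IsNoetherianRing (Localization.AtPrime p) :=
    IsLocalization.isNoetherianRing p.primeCompl _ hN
  have hpi := IsLocalizedModule.pi p.primeCompl
    (fun _ : Fin ν => Algebra.linearMap R (Localization.AtPrime p))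
  let e : LocalizedModule p.primeCompl (Fin ν → R) ≃ₗ[Localization.AtPrime p]
      (Fin ν → Localization.AtPrime p) :=
    LinearEquiv.extendScalarsOfIsLocalization p.primeCompl (Localization.AtPrime p)
      (IsLocalizedModule.linearEquiv p.primeCompl
        (LocalizedModule.mkLinearMap p.primeCompl (Fin ν → R))
        (LinearMap.pi fun i : Fin ν => Algebra.linearMap R (Localization.AtPrime p) ∘ₗ
          LinearMap.proj i))
  exact hd.core (f := LocalizedModule.map p.primeCompl (pushMap R M ε))
    (g := LocalizedModule.map p.primeCompl (LinearMap.range (pushMap R M ε)).mkQ)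
    (LocalizedModule.map_injective _ _ (pushMap_injective hG htf ε hsurj))
    (LocalizedModule.map_exact p.primeCompl _ _ (LinearMap.exact_map_mkQ_range _))
    (LocalizedModule.map_surjective _ _ (Submodule.mkQ_surjective _)) e
    (extend_functional p.primeCompl ε hsurj) n

end
end

section
/- Let R be a Gorenstein local ring, M a finitely generated torsion-free R-module with pushforward M_1, and p a prime ideal of R. If M_p is maximal Cohen-Macaulay over R_p, then (M_1)_p is either zero or maximal Cohen-Macaulay over R_p. -/
open RingTheory.Sequence CategoryTheory

universe u

noncomputable section

namespace Stmt9Aux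

open IsLocalRing
open scoped Pointwise

/-- Vanishing of `Ext^i_A(X, A)`. -/
abbrev EV (A : Type u) [CommRing A] (X : Type u) [AddCommGroup X] [Module A X] (i : ℕ) : Prop :=
  Subsingleton (Abelian.Ext (ModuleCat.of A X) (ModuleCat.of A A) i)

section les

variable {A : Type u} [CommRing A] {X Y Z : Type u} [AddCommGroup X] [Module A X]
  [AddCommGroup Y] [Module A Y] [AddCommGroup Z] [Module A Z]

/-- The short complex of a short exact sequence of modules. -/
abbrev sc (f : X →ₗ[A] Y) (g : Y →ₗ[A] Z) (h : Function.Exact f g) :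
    ShortComplex (ModuleCat.{u} A) :=
  ModuleCat.shortComplexOfCompEqZero f g h.linearMap_comp_eq_zero

lemma sc_exact (f : X →ₗ[A] Y) (g : Y →ₗ[A] Z) (h : Function.Exact f g)
    (hf : Function.Injective f) (hg : Function.Surjective g) : (sc f g h).ShortExact :=
  ModuleCat.shortComplex_shortExact _ h hf hg

lemma EV_iff {i : ℕ} : EV A X i ↔
    ∀ x : Abelian.Ext (ModuleCat.of A X) (ModuleCat.of A A) i, x = 0 :=
  subsingleton_iff_forall_eq 0

lemma EV_mid (f : X →ₗ[A] Y) (g : Y →ₗ[A] Z) (h : Function.Exact f g)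
    (hf : Function.Injective f) (hg : Function.Surjective g) {i : ℕ}
    (h1 : EV A X i) (h3 : EV A Z i) : EV A Y i := by
  rw [EV_iff] at *
  intro x
  obtain ⟨y, rfl⟩ := Abelian.Ext.contravariant_sequence_exact₂ (sc_exact f g h hf hg) _ x (h1 _)
  rw [h3 y, Abelian.Ext.comp_zero]

lemma EV_right (f : X →ₗ[A] Y) (g : Y →ₗ[A] Z) (h : Function.Exact f g)
    (hf : Function.Injective f) (hg : Function.Surjective g) {i : ℕ}
    (h1 : EV A X i) (h3 : EV A Y (i + 1)) : EV A Z (i + 1) := by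
  rw [EV_iff] at *
  intro x
  obtain ⟨y, rfl⟩ := Abelian.Ext.contravariant_sequence_exact₃ (sc_exact f g h hf hg) _ x (h3 _)
    (add_comm 1 i)
  rw [h1 y, Abelian.Ext.comp_zero]

lemma EV_left (f : X →ₗ[A] Y) (g : Y →ₗ[A] Z) (h : Function.Exact f g)
    (hf : Function.Injective f) (hg : Function.Surjective g) {i : ℕ}
    (h1 : EV A Y i) (h3 : EV A Z (i + 1)) : EV A X i := by
  rw [EV_iff] at *
  intro x
  obtain ⟨y, rfl⟩ := Abelian.Ext.contravariant_sequence_exact₁ (sc_exact f g h hf hg) _ x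
    (add_comm 1 i) (h3 _)
  rw [h1 y, Abelian.Ext.comp_zero]

lemma EV_zero_iff : EV A X 0 ↔ Subsingleton (X →ₗ[A] A) :=
  (Abelian.Ext.addEquiv₀.trans ModuleCat.homAddEquiv).subsingleton_congr

/-- If functionals extend along `f` and the middle has no first Ext, then the cokernel has no
first Ext. -/
lemma EV_one_of_extend (f : X →ₗ[A] Y) (g : Y →ₗ[A] Z) (h : Function.Exact f g)
    (hf : Function.Injective f) (hg : Function.Surjective g)
    (hext : ∀ φ : X →ₗ[A] A, ∃ ψ : Y →ₗ[A] A, ψ ∘ₗ f = φ)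
    (h3 : EV A Y 1) : EV A Z 1 := by
  rw [EV_iff] at *
  intro x
  obtain ⟨y, rfl⟩ := Abelian.Ext.contravariant_sequence_exact₃ (sc_exact f g h hf hg) _ x (h3 _)
    (add_zero 1)
  obtain ⟨φ, rfl⟩ := (Abelian.Ext.mk₀_bijective _ _).2 y
  obtain ⟨ψ, hψ⟩ := hext φ.hom
  have : φ = (sc f g h).f ≫ ModuleCat.ofHom ψ := by
    ext a
    exact (LinearMap.congr_fun hψ a).symm
  rw [this, ← Abelian.Ext.mk₀_comp_mk₀,
    (sc_exact f g h hf hg).extClass_comp_assoc]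

/-- If the cokernel has no first Ext, functionals extend. -/
lemma extend_of_EV_one (f : X →ₗ[A] Y) (g : Y →ₗ[A] Z) (h : Function.Exact f g)
    (hf : Function.Injective f) (hg : Function.Surjective g) (h3 : EV A Z 1)
    (φ : X →ₗ[A] A) : ∃ ψ : Y →ₗ[A] A, ψ ∘ₗ f = φ := by
  rw [EV_iff] at h3
  obtain ⟨y, hy⟩ := Abelian.Ext.contravariant_sequence_exact₁ (sc_exact f g h hf hg) _
    (Abelian.Ext.mk₀ (ModuleCat.ofHom φ)) (add_zero 1) (h3 _)
  obtain ⟨ψ, rfl⟩ := (Abelian.Ext.mk₀_bijective _ _).2 y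
  rw [Abelian.Ext.mk₀_comp_mk₀] at hy
  have := (Abelian.Ext.mk₀_bijective _ _).1 hy
  exact ⟨ψ.hom, congrArg ModuleCat.Hom.hom this⟩

lemma EV_succ_of_projective [Module.Projective A X] (i : ℕ) : EV A X (i + 1) := by
  rw [EV_iff]
  intro x
  exact Abelian.Ext.eq_zero_of_projective x

lemma EV_of_equiv (e : X ≃ₗ[A] Y) {i : ℕ} (h : EV A X i) : EV A Y i := by
  refine EV_mid (Z := PUnit.{u+1}) e.toLinearMap (0 : Y →ₗ[A] PUnit.{u+1}) ?_ e.injective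
    (Function.surjective_to_subsingleton _) h ?_
  · exact (e.exact_zero_iff_surjective _).2 e.surjective
  · cases i with
    | zero => rw [EV_zero_iff]; infer_instance
    | succ i => exact EV_succ_of_projective i

lemma EV_of_subsingleton [Subsingleton X] {i : ℕ} : EV A X i := by
  cases i with
  | zero => rw [EV_zero_iff]; infer_instance
  | succ i => exact EV_succ_of_projective i

end les

section loc

variable {A : Type u} [CommRing A] [IsNoetherianRing A] [IsLocalRing A]

lemma EV_nakayama {X : Type u} [AddCommGroup X] [Module A X] [Module.Finite A X] {x : A}
    (hx : x ∈ maximalIdeal A) (hreg : IsSMulRegular X x) {i : ℕ}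
    (h : EV A (QuotSMulTop x X) (i + 1)) : EV A X i := by
  have hfin : Module.Finite A (Abelian.Ext (ModuleCat.of A X) (ModuleCat.of A A) i) :=
    ModuleCat.finite_ext A _ _ i
  have hse := IsSMulRegular.smulShortComplex_shortExact (M := ModuleCat.of A X) hreg
  have key : (⊤ : Submodule A (Abelian.Ext (ModuleCat.of A X) (ModuleCat.of A A) i)) = ⊥ := by
    refine Submodule.eq_bot_of_le_smul_of_le_jacobson_bot (maximalIdeal A) _ ?_ ?_ ?_
    · exact Module.finite_def.mp hfin
    · intro y _
      obtain ⟨z, rfl⟩ := Abelian.Ext.contravariant_sequence_exact₁ hse (ModuleCat.of A A) y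
        (add_comm 1 i) ((EV_iff.mp h) _)
      have aux (z : Abelian.Ext (ModuleCat.of A X) (ModuleCat.of A A) i) :
          (Abelian.Ext.mk₀ (x • 𝟙 (ModuleCat.of A X))).comp z (zero_add i) = x • z := by
        rw [Abelian.Ext.mk₀_smul, Abelian.Ext.smul_comp, Abelian.Ext.mk₀_id_comp]
      exact (aux z) ▸ Submodule.smul_mem_smul hx trivial
    · exact (IsLocalRing.jacobson_eq_maximalIdeal ⊥ bot_ne_top).ge
  exact (Submodule.subsingleton_iff A).mp (subsingleton_iff_bot_eq_top.mp key.symm)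

lemma EV_all_of_residue {n : ℕ}
    (hQ : ∀ (X : Type u) [AddCommGroup X] [Module A X] [Module.Finite A X], EV A X (n + 1))
    (hk : EV A (A ⧸ maximalIdeal A) n)
    (X : Type u) [AddCommGroup X] [Module A X] [hX : Module.Finite A X] : EV A X n := by
  induction hX using IsNoetherianRing.induction_on_isQuotientEquivQuotientPrime A with
  | subsingleton N =>
    exact EV_of_subsingleton
  | quotient N p e =>
    by_cases hp : p.1 = maximalIdeal A
    · refine EV_of_equiv e.symm ?_
      rw [hp]
      exact hk
    · obtain ⟨x, hxm, hxp⟩ : ∃ x ∈ maximalIdeal A, x ∉ p.1 := by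
        by_contra! hcon
        exact hp (le_antisymm (le_maximalIdeal p.2.ne_top) hcon)
      refine EV_nakayama hxm ?_ (hQ _)
      rw [e.isSMulRegular_congr]
      have := p.2
      rw [isSMulRegular_iff_right_eq_zero_of_smul]
      intro y hy
      obtain ⟨y, rfl⟩ := Ideal.Quotient.mk_surjective y
      change Ideal.Quotient.mk p.1 (x * y) = 0 at hy
      rw [Ideal.Quotient.eq_zero_iff_mem] at hy ⊢
      exact (this.mem_or_mem hy).resolve_left hxp
  | exact N₁ N₂ N₃ f g hf hg h h1 h3 => exact EV_mid f g h hf hg h1 h3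

variable (A) in
/-- All Ext vanish strictly above `n`. -/
def IdB (n : ℕ) : Prop := ∀ i, n < i → ∀ (X : Type u) [AddCommGroup X] [Module A X]
    [Module.Finite A X], EV A X i

lemma exists_exact_id (h : ∃ n, IdB A n) :
    ∃ n, IdB A n ∧ ¬ EV A (A ⧸ maximalIdeal A) n := by
  classical
  refine ⟨Nat.find h, Nat.find_spec h, fun hk => ?_⟩
  have hall := EV_all_of_residue (fun X _ _ _ => Nat.find_spec h _ (Nat.lt_succ_self _) X) hk
  rcases hn : Nat.find h with _ | n
  · rw [hn] at hall
    have := EV_zero_iff.mp (hall A)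
    have h1 := LinearMap.congr_fun (Subsingleton.elim (LinearMap.id : A →ₗ[A] A) 0) 1
    exact one_ne_zero h1
  · refine Nat.find_min h (m := n) (by omega) ?_
    intro i hi X _ _ _
    rcases Nat.lt_or_ge (n + 1) i with h' | h'
    · exact Nat.find_spec h i (by omega) X
    · obtain rfl : i = n + 1 := by omega
      rw [← hn]
      exact hall X

lemma EV_of_weaklyRegular {n : ℕ} (hn : IdB A n) (rs : List A) :
    ∀ (X : Type u) [AddCommGroup X] [Module A X] [Module.Finite A X],
    (∀ r ∈ rs, r ∈ maximalIdeal A) → IsWeaklyRegular X rs →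
    ∀ i, n < i + rs.length → EV A X i := by
  induction rs with
  | nil => intro X _ _ _ _ _ i hi; exact hn i (by simpa using hi) X
  | cons r rs ih =>
    intro X _ _ _ hm hreg i hi
    rw [isWeaklyRegular_cons_iff] at hreg
    refine EV_nakayama (hm r (by simp)) hreg.1 ?_
    refine ih _ (fun r hr => hm r (by simp [hr])) hreg.2 _ ?_
    simp only [List.length_cons] at hi
    omega

lemma exists_weaklyRegular {n : ℕ} (hn : IdB A n) (hk : ¬ EV A (A ⧸ maximalIdeal A) n) (s : ℕ) :
    ∀ (j : ℕ) (C : Type u) [AddCommGroup C] [Module A C] [Module.Finite A C],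
    j + s = n → (∀ i, j < i → EV A C i) →
    ∃ rs : List A, rs.length = s ∧ (∀ r ∈ rs, r ∈ maximalIdeal A) ∧ IsWeaklyRegular C rs := by
  induction s with
  | zero => intro j C _ _ _ _ _; exact ⟨[], rfl, by simp, by simp⟩
  | succ s ih =>
    intro j C _ _ _ hj hC
    have hsub : Subsingleton ((A ⧸ maximalIdeal A) →ₗ[A] C) := by
      refine (subsingleton_iff_forall_eq 0).mpr fun f => ?_
      by_contra hf
      have hinj : Function.Injective f := by
        have : IsSimpleModule A (A ⧸ maximalIdeal A) := by
          rw [isSimpleModule_iff_isCoatom]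
          exact Ideal.isMaximal_def.mp inferInstance
        exact (LinearMap.injective_or_eq_zero f).resolve_right hf
      exact hk (EV_left f (LinearMap.range f).mkQ (LinearMap.exact_map_mkQ_range f) hinj
        (Submodule.mkQ_surjective _) (hC n (by omega)) (hn _ (Nat.lt_succ_self n) _))
    obtain ⟨x, hx, hreg⟩ := IsSMulRegular.subsingleton_linearMap_iff.mp hsub
    have hxm : x ∈ maximalIdeal A := by simpa [Ideal.annihilator_quotient] using hx
    have hex : Function.Exact (LinearMap.lsmul A C x) (x • (⊤ : Submodule A C)).mkQ :=
      LinearMap.exact_lsmul_mkQ_smul_top C x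
    obtain ⟨rs, hlen, hmem, hrs⟩ := ih (j + 1) (QuotSMulTop x C) (by omega) (by
      intro i hi
      obtain ⟨i, rfl⟩ : ∃ i', i = i' + 1 := ⟨i - 1, by omega⟩
      exact EV_right _ _ hex hreg (Submodule.mkQ_surjective _) (hC _ (by omega)) (hC _ (by omega)))
    refine ⟨x :: rs, by simp [hlen], ?_, ?_⟩
    · exact List.forall_mem_cons.mpr ⟨hxm, hmem⟩
    · rw [isWeaklyRegular_cons_iff]; exact ⟨hreg, hrs⟩

lemma length_le_dim {X : Type u} [AddCommGroup X] [Module A X] [Module.Finite A X]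
    [Nontrivial X] (rs : List A) (hm : ∀ r ∈ rs, r ∈ maximalIdeal A)
    (h : IsWeaklyRegular X rs) : (rs.length : WithBot ℕ∞) ≤ ringKrullDim A := by
  have hreg : IsRegular X rs := 
    (IsLocalRing.isRegular_iff_isWeaklyRegular_of_subset_maximalIdeal hm).mpr h
  have h1 := Module.supportDim_add_length_eq_supportDim_of_isRegular rs hreg
  have h2 := Module.supportDim_le_ringKrullDim A X
  refine le_trans ?_ (h1.le.trans h2)
  have : Nontrivial (X ⧸ Ideal.ofList rs • (⊤ : Submodule A X)) :=
    Submodule.Quotient.nontrivial_iff.mpr hreg.2.symm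
  have h0 : 0 ≤ Module.supportDim A (X ⧸ Ideal.ofList rs • (⊤ : Submodule A X)) := by
    rw [← WithBot.coe_unbot _ (Module.supportDim_ne_bot_of_nontrivial A
      (X ⧸ Ideal.ofList rs • (⊤ : Submodule A X)))]
    exact WithBot.coe_le_coe.mpr bot_le
  exact le_add_of_nonneg_left h0

/-- The core statement over a local ring. -/
lemma core (h : ∃ n, IdB A n) {N : Type u} [AddCommGroup N] [Module A N] [Module.Finite A N]
    [Nontrivial N]
    {F C : Type u} [AddCommGroup F] [Module A F] [Module.Finite A F] [Module.Projective A F]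
    [AddCommGroup C] [Module A C] [Module.Finite A C]
    (f : N →ₗ[A] F) (g : F →ₗ[A] C) (hfg : Function.Exact f g) (hf : Function.Injective f)
    (hg : Function.Surjective g)
    (hext : ∀ φ : N →ₗ[A] A, ∃ ψ : F →ₗ[A] A, ψ ∘ₗ f = φ)
    (rs : List A) (hrs : ∀ r ∈ rs, r ∈ maximalIdeal A) (hreg : IsWeaklyRegular N rs)
    (hdim : (rs.length : WithBot ℕ∞) = ringKrullDim A) :
    ∃ rs' : List A, rs'.length = rs.length ∧ (∀ r ∈ rs', r ∈ maximalIdeal A) ∧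
      IsWeaklyRegular C rs' := by
  obtain ⟨n, hn, hk⟩ := exists_exact_id h
  have hnd : n ≤ rs.length := by
    obtain ⟨ts, hlen, hts, hreg⟩ := exists_weaklyRegular hn hk n 0 A (by simp) (by
      intro i hi
      obtain ⟨i, rfl⟩ : ∃ i', i = i' + 1 := ⟨i - 1, by omega⟩
      exact EV_succ_of_projective i)
    have := length_le_dim ts hts hreg
    rw [← hdim, hlen] at this
    exact_mod_cast this
  have hN := EV_of_weaklyRegular hn rs N hrs hreg
  have hdn : rs.length ≤ n := by
    by_contra! hlt
    have h0 : Subsingleton (N →ₗ[A] A) := EV_zero_iff.mp (hN 0 (by omega))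
    obtain ⟨y, hy⟩ := exists_ne (0 : N)
    have hfy : f y ≠ 0 := fun h => hy (hf (by simpa using h))
    obtain ⟨ψ, hψ⟩ : ∃ ψ : F →ₗ[A] A, ψ (f y) ≠ 0 := by
      by_contra! hcon
      exact hfy ((Module.forall_dual_apply_eq_zero_iff A (f y)).mp hcon)
    exact hψ (LinearMap.congr_fun (Subsingleton.elim (ψ ∘ₗ f) 0) y)
  obtain rfl : n = rs.length := le_antisymm hnd hdn
  refine exists_weaklyRegular hn hk _ 0 C (by simp) ?_
  intro i hi
  obtain ⟨i, rfl⟩ : ∃ i', i = i' + 1 := ⟨i - 1, by omega⟩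
  rcases i with _ | i
  · exact EV_one_of_extend f g hfg hf hg hext (EV_succ_of_projective 0)
  · exact EV_right f g hfg hf hg (hN _ (by omega)) (EV_succ_of_projective _)

end loc
end Stmt9Aux

namespace Stmt9Aux

open IsLocalRing

section glob

lemma hasID_of_idLE (R : Type u) [CommRing R] (n : ℕ) : ∀ (M : Type u) [AddCommGroup M]
    [Module R M], idLE R n M → HasInjectiveDimensionLE (ModuleCat.of R M) n := by
  induction n with
  | zero =>
    intro M _ _ h
    have h' : Module.Injective R M := h
    have : Injective (ModuleCat.of R M) := (Module.injective_iff_injective_object R M).mp h'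
    exact injective_iff_hasInjectiveDimensionLT_one.mp this
  | succ n ih =>
    intro M _ _ h
    obtain ⟨I, _, _, hI, f, hf, hq⟩ := h
    have : Injective (ModuleCat.of R I) := (Module.injective_iff_injective_object R I).mp hI
    have hS := sc_exact f (LinearMap.range f).mkQ (LinearMap.exact_map_mkQ_range f) hf
        (Submodule.mkQ_surjective _)
    exact (hS.hasInjectiveDimensionLT_X₃_iff n this).mp (ih _ hq)

variable {R : Type u} [CommRing R] [IsNoetherianRing R]

lemma exists_IdB (h : ∃ n, idLE R n R) (p : Ideal R) [p.IsPrime] :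
    ∃ n, IdB (Localization.AtPrime p) n := by
  obtain ⟨n, hn⟩ := h
  have h1 := hasID_of_idLE R n R hn
  have h2 := ModuleCat.localizedModule_hasInjectiveDimensionLE n p.primeCompl (ModuleCat.of R R)
  have hloc : IsLocalizedModule p.primeCompl
      ((ModuleCat.of R R).localizedModuleMkLinearMap p.primeCompl) :=
    ModuleCat.localizedModule_isLocalizedModule (ModuleCat.of R R) p.primeCompl
  have e : (ModuleCat.of R R).localizedModule p.primeCompl ≃ₗ[Localization.AtPrime p]
      ModuleCat.of (Localization.AtPrime p) (Localization.AtPrime p) :=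
    LinearEquiv.extendScalarsOfIsLocalization p.primeCompl
        (Localization.AtPrime p) (IsLocalizedModule.linearEquiv p.primeCompl
        ((ModuleCat.of R R).localizedModuleMkLinearMap p.primeCompl)
        (Algebra.linearMap R (Localization.AtPrime p)))
  have h3 := (ModuleCat.hasInjectiveDimensionLE_iff_of_linearEquiv e n).mp h2
  exact ⟨n, fun i hi X _ _ _ => HasInjectiveDimensionLT.subsingleton _ (n + 1) i hi _⟩

variable {M : Type u} [AddCommGroup M] [Module R M] [Module.Finite R M]

lemma dual_lift (p : Ideal R) [p.IsPrime]
    (φ : LocalizedModule p.primeCompl M →ₗ[Localization.AtPrime p] Localization.AtPrime p) :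
    ∃ (g : M →ₗ[R] R) (s : p.primeCompl), ∀ m : M,
      algebraMap R (Localization.AtPrime p) (g m) =
        algebraMap R (Localization.AtPrime p) s *
          φ (LocalizedModule.mkLinearMap p.primeCompl M m) := by
  have : Module.FinitePresentation R M := Module.finitePresentation_of_finite R M
  obtain ⟨g, s, h⟩ := Module.FinitePresentation.exists_lift_of_isLocalizedModule p.primeCompl
    (Algebra.linearMap R (Localization.AtPrime p))
    ((φ.restrictScalars R) ∘ₗ LocalizedModule.mkLinearMap p.primeCompl M)
  refine ⟨g, s, fun m => ?_⟩
  have := LinearMap.congr_fun h m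
  rw [← Algebra.smul_def]
  exact this

lemma exists_dual_ne (h : ∃ n, idLE R n R) (htf : Submodule.torsion R M = ⊥) {m : M}
    (hm : m ≠ 0) : ∃ g : M →ₗ[R] R, g m ≠ 0 := by
  classical
  -- the annihilator of `m` lies in an associated prime
  obtain ⟨q, hq, hle⟩ : ∃ q ∈ associatedPrimes R R, Ideal.torsionOf R M m ≤ q := by
    have hsub : (Ideal.torsionOf R M m : Set R) ⊆ ⋃ q ∈ associatedPrimes R R, (q : Set R) := by
      rw [biUnion_associatedPrimes_eq_compl_nonZeroDivisors]
      intro r hr hr'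
      apply hm
      rw [← Submodule.mem_bot R, ← htf, Submodule.mem_torsion_iff]
      exact ⟨⟨r, hr'⟩, hr⟩
    have := (Ideal.subset_union_prime_finite (associatedPrimes.finite R R) (f := id) 0 0
      (fun q hq _ _ => hq.isPrime)).mp hsub
    exact this
  have hqp : q.IsPrime := hq.isPrime
  obtain ⟨_, a, ha⟩ := isAssociatedPrime_iff.mp hq
  set B := Localization.AtPrime q with hB
  have hBn : IsNoetherianRing B := IsLocalization.isNoetherianRing q.primeCompl _ inferInstance
  let b : B := algebraMap R B a
  have hb0 : b ≠ 0 := by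
    intro hb
    obtain ⟨s, hs⟩ := (IsLocalization.map_eq_zero_iff q.primeCompl B a).mp hb
    apply s.2
    change (s : R) ∈ q
    exact ha.ge (Submodule.mem_colon_singleton.mpr hs)
  have hbm : ∀ r ∈ maximalIdeal B, r * b = 0 := by
    intro r hr
    obtain ⟨x, s, rfl⟩ := IsLocalization.exists_mk'_eq q.primeCompl r
    have hx : x ∈ q := (IsLocalization.AtPrime.mk'_mem_maximal_iff B q x s).mp hr
    have hx0 : x * a = 0 := Submodule.mem_colon_singleton.mp (ha.le hx)
    rw [IsLocalization.mk'_eq_mul_mk'_one, mul_right_comm, ← map_mul, hx0, map_zero, zero_mul]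
  obtain ⟨n, hn, hk⟩ := exists_exact_id (exists_IdB h q)
  have hn0 : n = 0 := by
    by_contra hne
    obtain ⟨rs, hlen, hmem, hreg⟩ := exists_weaklyRegular hn hk n 0 B (by simp) (by
      intro i hi
      obtain ⟨i, rfl⟩ : ∃ i', i = i' + 1 := ⟨i - 1, by omega⟩
      exact EV_succ_of_projective i)
    rcases rs with _ | ⟨r, rs⟩
    · simp at hlen; omega
    · rw [isWeaklyRegular_cons_iff] at hreg
      exact hb0 (hreg.1.right_eq_zero_of_smul (hbm r (hmem r (by simp))))
  subst hn0
  let y : LocalizedModule q.primeCompl M := LocalizedModule.mkLinearMap q.primeCompl M m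
  have hy0 : y ≠ 0 := by
    intro hy
    obtain ⟨s, hs⟩ := (IsLocalizedModule.eq_zero_iff q.primeCompl
      (LocalizedModule.mkLinearMap q.primeCompl M)).mp hy
    exact s.2 (hle hs)
  have hann : Ideal.torsionOf B _ y ≤ maximalIdeal B := by
    refine le_maximalIdeal fun htop => hy0 ?_
    have : (1 : B) ∈ Ideal.torsionOf B _ y := htop ▸ trivial
    simpa using this
  let f : (B ⧸ Ideal.torsionOf B _ y) →ₗ[B] LocalizedModule q.primeCompl M :=
    (Ideal.torsionOf B _ y).liftQ (LinearMap.toSpanSingleton B _ y) le_rfl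
  have hf : Function.Injective f := LinearMap.ker_eq_bot.mp (Submodule.ker_liftQ_eq_bot _ _ _ le_rfl)
  let φ : (B ⧸ Ideal.torsionOf B _ y) →ₗ[B] B :=
    (Ideal.torsionOf B _ y).liftQ (LinearMap.toSpanSingleton B _ b) (fun r hr => hbm r (hann hr))
  obtain ⟨ψ, hψ⟩ := extend_of_EV_one f (LinearMap.range f).mkQ (LinearMap.exact_map_mkQ_range f) hf
        (Submodule.mkQ_surjective _) (hn 1 one_pos _) φ
  have hψy : ψ y = b := by
    have := LinearMap.congr_fun hψ (Submodule.Quotient.mk 1)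
    have e1 : f (Submodule.Quotient.mk 1) = y := one_smul B y
    have e2 : φ (Submodule.Quotient.mk 1) = b := one_smul B b
    rw [LinearMap.comp_apply, e1, e2] at this
    exact this
  obtain ⟨g, s, hg⟩ := dual_lift q ψ
  refine ⟨g, fun h0 => hb0 ?_⟩
  have := hg m
  rw [h0, map_zero] at this
  rw [← hψy]
  exact ((IsLocalization.map_units B s).mul_right_eq_zero).mp this.symm

lemma pushMap_apply_eq {ν : ℕ} (ε : (Fin ν → R) →ₗ[R] Module.Dual R M) (v : Fin ν → R) (m : M) :
    ε v m = ∑ i, v i * pushMap R M ε m i := by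
  conv_lhs => rw [pi_eq_sum_univ' v]
  simp [pushMap, LinearMap.sum_apply]

lemma pushMap_injective (h : ∃ n, idLE R n R) (htf : Submodule.torsion R M = ⊥) {ν : ℕ}
    (ε : (Fin ν → R) →ₗ[R] Module.Dual R M) (hsurj : Function.Surjective ε) :
    Function.Injective (pushMap R M ε) := by
  rw [injective_iff_map_eq_zero]
  intro m hm
  by_contra hne
  obtain ⟨g, hg⟩ := exists_dual_ne h htf hne
  obtain ⟨v, rfl⟩ := hsurj g
  apply hg
  rw [pushMap_apply_eq, hm]
  simp

lemma extend_loc {ν : ℕ} (ε : (Fin ν → R) →ₗ[R] Module.Dual R M) (hsurj : Function.Surjective ε)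
    (p : Ideal R) [p.IsPrime]
    (φ : LocalizedModule p.primeCompl M →ₗ[Localization.AtPrime p] Localization.AtPrime p) :
    ∃ ψ : LocalizedModule p.primeCompl (Fin ν → R) →ₗ[Localization.AtPrime p]
      Localization.AtPrime p, ψ ∘ₗ LocalizedModule.map p.primeCompl (pushMap R M ε) = φ := by
  obtain ⟨g, s, hg⟩ := dual_lift p φ
  obtain ⟨v, rfl⟩ := hsurj g
  let G : (Fin ν → R) →ₗ[R] R := ∑ i, v i • LinearMap.proj i
  have hG : ∀ m, G (pushMap R M ε m) = ε v m := fun m => by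
    rw [pushMap_apply_eq]
    simp [G, LinearMap.sum_apply]
  let G' := IsLocalizedModule.mapExtendScalars p.primeCompl
    (LocalizedModule.mkLinearMap p.primeCompl (Fin ν → R))
    (Algebra.linearMap R (Localization.AtPrime p)) (Localization.AtPrime p) G
  refine ⟨IsLocalization.mk' (Localization.AtPrime p) 1 s • G', ?_⟩
  apply LinearMap.restrictScalars_injective R
  refine IsLocalizedModule.linearMap_ext p.primeCompl (LocalizedModule.mkLinearMap p.primeCompl M)
    (Algebra.linearMap R (Localization.AtPrime p)) ?_
  ext m
  have h1 : G' (LocalizedModule.map p.primeCompl (pushMap R M ε)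
      (LocalizedModule.mkLinearMap p.primeCompl M m)) =
      algebraMap R (Localization.AtPrime p) (ε v m) := by
    rw [← hG]
    rw [LocalizedModule.mkLinearMap_apply, LocalizedModule.map_mk]
    exact IsLocalizedModule.map_apply p.primeCompl
      (LocalizedModule.mkLinearMap p.primeCompl (Fin ν → R))
      (Algebra.linearMap R (Localization.AtPrime p)) G (pushMap R M ε m)
  change IsLocalization.mk' (Localization.AtPrime p) 1 s • G' (LocalizedModule.map p.primeCompl
    (pushMap R M ε) (LocalizedModule.mkLinearMap p.primeCompl M m)) =
    φ (LocalizedModule.mkLinearMap p.primeCompl M m)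
  rw [h1, hg, smul_eq_mul, ← mul_assoc, IsLocalization.mk'_spec, map_one, one_mul]

end glob

lemma weaklyRegular_of_subsingleton {A : Type u} [CommRing A] (rs : List A) :
    ∀ (X : Type u) [AddCommGroup X] [Module A X] [Subsingleton X], IsWeaklyRegular X rs := by
  induction rs with
  | nil => intro X _ _ _; simp
  | cons r rs ih =>
    intro X _ _ _
    rw [isWeaklyRegular_cons_iff]
    exact ⟨fun _ _ _ => Subsingleton.elim _ _, ih _⟩

end Stmt9Aux

/-- if `M_p` is maximal Cohen-Macaulay then `(M₁)_p` is zero or maximal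
Cohen-Macaulay. -/
theorem stmt9 (R : Type u) [CommRing R] (hG : IsGorensteinLocalRing R)
    (M : Type u) [AddCommGroup M] [Module R M] [Module.Finite R M]
    (htf : Submodule.torsion R M = ⊥) (ν : ℕ)
    (ε : (Fin ν → R) →ₗ[R] Module.Dual R M) (hsurj : Function.Surjective ε)
    (hmin : ∀ m : ℕ, m < ν →
      ¬ ∃ g : (Fin m → R) →ₗ[R] Module.Dual R M, Function.Surjective g) (p : Ideal R) [p.IsPrime]
    (hMp : IsMCM (Localization.AtPrime p) (LocalizedModule p.primeCompl M)) :
    Subsingleton (LocalizedModule p.primeCompl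
        ((Fin ν → R) ⧸ LinearMap.range (pushMap R M ε))) ∨
      IsMCM (Localization.AtPrime p) (LocalizedModule p.primeCompl
        ((Fin ν → R) ⧸ LinearMap.range (pushMap R M ε))) := by
  obtain ⟨hnoeth, hloc, hid⟩ := hG
  set A := Localization.AtPrime p with hA
  have hAn : IsNoetherianRing A := IsLocalization.isNoetherianRing p.primeCompl _ hnoeth
  set N := LocalizedModule p.primeCompl M with hN
  set C := LocalizedModule p.primeCompl ((Fin ν → R) ⧸ LinearMap.range (pushMap R M ε)) with hC
  rcases subsingleton_or_nontrivial C with hCs | hCn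
  · exact Or.inl hCs
  right
  -- extract the regular sequence
  obtain ⟨d, hd⟩ : ∃ d : ℕ, rdepth A N = (d : ℕ∞) := by
    have hne : rdepth A N ≠ ⊤ := by
      intro htop
      have h1 : (rdepth A N : WithBot ℕ∞) = ringKrullDim A := hMp
      have h2 : ringKrullDim A < ⊤ := ringKrullDim_lt_top
      rw [← h1, htop] at h2
      exact lt_irrefl _ h2
    obtain ⟨d, hd⟩ := ENat.ne_top_iff_exists.mp hne
    exact ⟨d, hd.symm⟩
  have hdim : ((d : ℕ) : WithBot ℕ∞) = ringKrullDim A := by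
    have : (rdepth A N : WithBot ℕ∞) = ringKrullDim A := hMp
    rw [hd] at this
    exact this
  obtain ⟨rs, hlen, hrs, hreg⟩ : ∃ rs : List A, rs.length = d ∧ (∀ r ∈ rs, r ∈ nonunits A) ∧
      IsWeaklyRegular N rs := by
    haveI : Nonempty ↑{n : ℕ∞ | ∃ rs : List A,
      (rs.length : ℕ∞) = n ∧ (∀ r ∈ rs, r ∈ nonunits A) ∧
        RingTheory.Sequence.IsWeaklyRegular N rs} := ⟨⟨0, [], by simp⟩⟩
    have hmem := ENat.sSup_mem_of_nonempty_of_lt_top (s := {n : ℕ∞ | ∃ rs : List A,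
      (rs.length : ℕ∞) = n ∧ (∀ r ∈ rs, r ∈ nonunits A) ∧
        RingTheory.Sequence.IsWeaklyRegular N rs})
        (by change rdepth A N < ⊤; rw [hd]; exact ENat.coe_lt_top d)
    obtain ⟨rs, h1, h2, h3⟩ := hmem
    refine ⟨rs, ?_, h2, h3⟩
    change _ = rdepth A N at h1
    rw [hd] at h1
    exact_mod_cast h1
  have hNn : Nontrivial N := by
    by_contra hcon
    have : Subsingleton N := not_nontrivial_iff_subsingleton.mp hcon
    have hle : ((d + 1 : ℕ) : ℕ∞) ≤ rdepth A N :=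
      le_sSup ⟨List.replicate (d + 1) 0, by simp, by
        intro r hr
        rw [List.eq_of_mem_replicate hr]
        exact zero_mem_nonunits.mpr zero_ne_one, Stmt9Aux.weaklyRegular_of_subsingleton _ _⟩
    rw [hd] at hle
    have : d + 1 ≤ d := by exact_mod_cast hle
    omega
  have hfg := LocalizedModule.map_exact p.primeCompl _ _
    (LinearMap.exact_map_mkQ_range (pushMap R M ε))
  have hinj := LocalizedModule.map_injective p.primeCompl _
    (Stmt9Aux.pushMap_injective hid htf ε hsurj)
  have hsur := LocalizedModule.map_surjective p.primeCompl _
    (Submodule.mkQ_surjective (LinearMap.range (pushMap R M ε)))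
  obtain ⟨ts, htl, hts, htr⟩ := Stmt9Aux.core (Stmt9Aux.exists_IdB hid p) _ _ hfg hinj hsur
    (Stmt9Aux.extend_loc ε hsurj p) rs hrs hreg (by rw [hlen]; exact hdim)
  change (rdepth A C : WithBot ℕ∞) = ringKrullDim A
  rw [← hdim]
  have : rdepth A C = (d : ℕ∞) := by
    apply le_antisymm
    · refine sSup_le ?_
      rintro _ ⟨us, rfl, hus, hur⟩
      have := Stmt9Aux.length_le_dim us hus hur
      rw [← hdim] at this
      exact_mod_cast this
    · exact le_sSup ⟨ts, by rw [htl, hlen], hts, htr⟩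
  rw [this]
  rfl

end
end
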